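/- arXiv:1009.6139 — 2 statements merged into one kernel-verified Lean document; each statement's English description precedes it below -/
import Mathlib

section
/- Let p be an odd prime, k an integer with 1 ≤ k < p/2, and i an integer with 1 ≤ i < p/2. For 1 ≤ j ≤ 2k−1 set δ_j = 2iθ_i[v_{j,k}, v_{j−1,k}, …, v_{1,k}] ∈ F_p*. Then in F_p(T) one has the finite continued fraction expansion P_{kp−i}/Q_k^p = [b₁, b₂, …, b_n], which consists of 2k blocks: for 1 ≤ j ≤ 2k−1 the j-th block is v_{j,k}A_{1,i} followed by the 2i partial quotients −δ_j^{(−1)^m} v_{m,i} T for m = 1, 2, …, 2i (i.e. −δ_j⁻¹v_{1,i}T, −δ_j v_{2,i}T, …, −δ_j⁻¹v_{2i−1,i}T, −δ_j v_{2i,i}T), and the final (2k-th) block is the single partial quotient v_{2k,k}A_{1,i}. Moreover [b₁, b₂, …, b_n] = −4k²θ_k²[b_n, b_{n−1}, …, b₁]. -/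
/-!
The value of a continued fraction `[a₁, …, aₙ]` is the quotient of the entries of the first column
of `∏ !![aₘ, 1; 1, 0]`, and reversing the list transposes this product. When all partial quotients
have positive degree, no denominator vanishes (`fcf_eq_div`).

The first ingredient is the matrix `V_k` of `[v_{1,k} T, …, v_{2k,k} T]` (`vProd`). Writing
`v_{m,k} = (2k - 2m + 1) u_m`, the recursion for `v` becomes `u_{m+1} u_m m (2k - m) = 1`, and by
induction the consecutive continuants satisfy a first-order differential system (`linProd_ode`).
At `m = 2k` the system decouples, and as all degrees are less than `p` its solutions are determined
by their constant terms: the first row of `V_k` is `(-1)^k (P_k, -s Q_k)` for a constant `s`. The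
reversed sequence is of the same kind, which gives the first column `(-1)^k (P_k, Q_k)`. Taking the
determinant at `T = 1` and using the beta integral `Q_k(1) = -1 / (2kθ_k)` gives `s = 4k²θ_k²`.

The second ingredient is the division `T^p = A_{1,i} P_i - 2iθ_i Q_i` (`X_pow_eq`). With
`f_j = [v_{j,k}, …, v_{1,k}]` and `E_j = !![1, -2iθ_i f_j⁻¹ Q_i; 0, P_i]`, the matrix of the
`j`-th block satisfies `Block_j E_j = (-1)^i E_{j-1} !![v_{j,k} T^p, 1; 1, 0]` (`block_link`).
These relations telescope, and since `f_{2k} = 0`, the last partial quotient closes the chain: the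
matrix `M` of the whole expansion satisfies
`M diag(P_i, 1) = ± diag(1, P_i) Frob(V_k)` (`blockList_prod`). Its first column is
`± (P_k^p / P_i, Q_k^p) = ± (P_{kp-i}, Q_k^p)`, which is the expansion; the off-diagonal entries
of `M` have ratio `-4k²θ_k²`, which is the reversal formula.
-/

noncomputable section
open Polynomial

def Tval (F : Type) [Field F] : LaurentSeries F :=
  (HahnSeries.single (1 : ℤ) (1 : F) : LaurentSeries F)⁻¹

def adeg {F : Type} [Field F] (α : LaurentSeries F) : ℤ := -α.order

def pEval {F : Type} [Field F] (f : Polynomial F) : LaurentSeries F :=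
  f.eval₂ HahnSeries.C (Tval F)

def pEvalHom (F : Type) [Field F] : Polynomial F →+* LaurentSeries F :=
  Polynomial.eval₂RingHom HahnSeries.C (Tval F)

/-- substitution `T ↦ v T` on Laurent series in `1/T`
(the underlying Hahn-series variable is `1/T`). -/
def scaleT {F : Type} [Field F] (v : F) (α : LaurentSeries F) : LaurentSeries F where
  coeff n := v ^ (-n) * α.coeff n
  isPWO_support' := α.isPWO_support'.mono (fun n hn => by
    simp only [Function.mem_support, ne_eq] at hn ⊢
    intro h; exact hn (by rw [h, mul_zero]))

/-- coefficient-wise map of Laurent series along a ring homomorphism. -/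
def lsMap {F L : Type} [Field F] [Field L] (f : F →+* L) (α : LaurentSeries F) :
    LaurentSeries L where
  coeff n := f (α.coeff n)
  isPWO_support' := α.isPWO_support'.mono (fun n hn => by
    simp only [Function.mem_support, ne_eq] at hn ⊢
    intro h; exact hn (by rw [h, map_zero]))

/-- integral (polynomial) part of a Laurent series in `1/T`. -/
def intPart {F : Type} [Field F] (α : LaurentSeries F) : Polynomial F :=
  ∑ j ∈ Finset.range ((-α.order).toNat + 1),
    Polynomial.C (α.coeff (-(j : ℤ))) * Polynomial.X ^ j

def IsCFOf {F : Type} [Field F] (α : LaurentSeries F) (a : ℕ → Polynomial F)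
    (β : ℕ → LaurentSeries F) : Prop :=
  β 1 = α ∧ ∀ n, 1 ≤ n →
    0 < (a n).degree ∧ 0 < adeg (β n) ∧ β n = pEval (a n) + (β (n + 1))⁻¹

def fcf {F : Type} [DivisionRing F] : List F → F
  | [] => 0
  | [c] => c
  | c :: d :: t => c + (fcf (d :: t))⁻¹

def fcfWD {F : Type} [DivisionRing F] : List F → Prop
  | [] => True
  | [_] => True
  | _ :: d :: t => fcf (d :: t) ≠ 0 ∧ fcfWD (d :: t)

def polyInt {F : Type} [Field F] (f : Polynomial F) : Polynomial F :=
  ∑ i ∈ Finset.range (f.natDegree + 1),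
    Polynomial.C (f.coeff i * ((i : F) + 1)⁻¹) * Polynomial.X ^ (i + 1)

def Pka {F : Type} [Field F] (k : ℕ) (a : F) : Polynomial F :=
  (Polynomial.X ^ 2 + Polynomial.C a) ^ k

def Qka {F : Type} [Field F] (k : ℕ) (a : F) : Polynomial F := polyInt (Pka (k - 1) a)

def Pk {F : Type} [Field F] (k : ℕ) : Polynomial F := (Polynomial.X ^ 2 - 1) ^ k

def Qk {F : Type} [Field F] (k : ℕ) : Polynomial F := polyInt (Pk (k - 1))

def Aseq (F : Type) [Field F] (p k : ℕ) : ℕ → Polynomial F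
  | 0 => Polynomial.X
  | i + 1 => Aseq F p k i ^ p / Pk k

def vseq (F : Type) [Field F] (k : ℕ) : ℕ → F
  | 0 => 1
  | 1 => 2 * k - 1
  | i + 1 =>
      (((2 * (k : ℤ) - 2 * i - 1) * (2 * (k : ℤ) - 2 * i + 1) : ℤ) : F) *
        (((i : F) * (2 * k - i))⁻¹) * (vseq F k i)⁻¹

def theta (F : Type) [Field F] (k : ℕ) : F :=
  (-1) ^ k * ∏ j ∈ Finset.Icc 1 k, (1 - (2 * (j : F))⁻¹)

def continuant {R : Type} [CommRing R] (a : ℕ → R) (c0 c1 : R) : ℕ → R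
  | 0 => c0
  | 1 => c1
  | n + 2 => a (n + 2) * continuant a c0 c1 (n + 1) + continuant a c0 c1 n

def largestPow (m N : ℕ) : ℕ := sSup {j : ℕ | m ^ j ∣ N}

def nu0 {F : Type} [Field F] (a : ℕ → Polynomial F) : ℝ :=
  Filter.limsup
    (fun n => ((a (n + 1)).natDegree : ℝ) / ∑ j ∈ Finset.Icc 1 n, ((a j).natDegree : ℝ))
    Filter.atTop

/-! ### Continued fractions as products of 2 × 2 matrices -/

/-- The matrix of the homography `y ↦ a + 1/y`. -/
def cfMat {R : Type} [CommRing R] (a : R) : Matrix (Fin 2) (Fin 2) R := !![a, 1; 1, 0]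

/-- The product of the matrices `cfMat a` along a list; its first column is the pair of
continuants `K(a₁, …, aₙ)`, `K(a₂, …, aₙ)`, its first row the pair
`K(a₁, …, aₙ)`, `K(a₁, …, aₙ₋₁)`. -/
def cfProd {R : Type} [CommRing R] (L : List R) : Matrix (Fin 2) (Fin 2) R :=
  (L.map cfMat).prod

section General

variable {R : Type} [CommRing R]

lemma cfProd_nil : cfProd ([] : List R) = 1 := rfl

lemma cfProd_cons (a : R) (L : List R) : cfProd (a :: L) = cfMat a * cfProd L := by
  simp [cfProd]

lemma cfProd_append (L L' : List R) : cfProd (L ++ L') = cfProd L * cfProd L' := by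
  simp [cfProd]

lemma cfProd_singleton (a : R) : cfProd [a] = cfMat a := by
  simp [cfProd]

lemma cfMat_transpose (a : R) : (cfMat a).transpose = cfMat a := by
  ext i j; fin_cases i <;> fin_cases j <;> rfl

lemma cfProd_reverse (L : List R) : cfProd L.reverse = (cfProd L).transpose := by
  induction L with
  | nil => simp [cfProd]
  | cons a L ih =>
    rw [List.reverse_cons, cfProd_append, ih, cfProd_singleton, cfProd_cons,
      Matrix.transpose_mul, cfMat_transpose]

lemma cfProd_det (L : List R) : (cfProd L).det = (-1) ^ L.length := by
  induction L with
  | nil => simp [cfProd]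
  | cons a L ih =>
    rw [cfProd_cons, Matrix.det_mul, ih, List.length_cons, pow_succ']
    simp [cfMat, Matrix.det_fin_two]

lemma cfMat_mul_apply (a : R) (M : Matrix (Fin 2) (Fin 2) R) (j : Fin 2) :
    (cfMat a * M) 0 j = a * M 0 j + M 1 j ∧ (cfMat a * M) 1 j = M 0 j := by
  simp [cfMat, Matrix.mul_apply, Fin.sum_univ_two]

lemma mul_cfMat_apply (a : R) (M : Matrix (Fin 2) (Fin 2) R) (j : Fin 2) :
    (M * cfMat a) j 0 = M j 0 * a + M j 1 ∧ (M * cfMat a) j 1 = M j 0 := by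
  simp [cfMat, Matrix.mul_apply, Fin.sum_univ_two]

end General

/-- For partial quotients of positive degree the degrees of the continuants increase strictly,
so no denominator of the continued fraction vanishes and its value is a quotient of
continuants. -/
lemma fcf_eq_div {F : Type} [Field F] (L : List F[X]) (hL : ∀ a ∈ L, 0 < a.degree) :
    (cfProd L 1 0).degree < (cfProd L 0 0).degree ∧
      (L ≠ [] → fcf (L.map (algebraMap F[X] (RatFunc F))) =
        algebraMap F[X] (RatFunc F) (cfProd L 0 0) /
          algebraMap F[X] (RatFunc F) (cfProd L 1 0)) := by
  induction L with
  | nil => simp [cfProd]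
  | cons a L ih =>
    obtain ⟨hd, he⟩ := ih (fun b hb => hL b (List.mem_cons_of_mem _ hb))
    have ha : 0 < a.degree := hL a List.mem_cons_self
    rw [cfProd_cons, (cfMat_mul_apply a _ 0).1, (cfMat_mul_apply a _ 0).2]
    have h0 : cfProd L 0 0 ≠ 0 := by
      intro h
      rw [h, degree_zero] at hd
      exact not_lt_bot hd
    have h1 : (cfProd L 0 0).degree < (a * cfProd L 0 0).degree := by
      rw [degree_mul, degree_eq_natDegree h0]
      have ha0 : a ≠ 0 := by rintro rfl; simp at ha
      rw [degree_eq_natDegree ha0] at ha ⊢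
      norm_cast at ha ⊢
      omega
    refine ⟨?_, fun _ => ?_⟩
    · rw [degree_add_eq_left_of_degree_lt (hd.trans h1)]
      exact h1
    · have h0' : algebraMap F[X] (RatFunc F) (cfProd L 0 0) ≠ 0 := by
        simpa using h0
      cases L with
      | nil => simp [fcf, cfProd]
      | cons b t =>
        have := he (by simp)
        rw [List.map_cons] at this
        rw [List.map_cons, List.map_cons, fcf, this, map_add, map_mul]
        field_simp

/-! ### Polynomials of degree less than the characteristic -/

section Prime

variable {p : ℕ} [Fact p.Prime]

lemma intCast_ne_zero_of_abs_lt (z : ℤ) (hz : z ≠ 0) (h : |z| < p) : (z : ZMod p) ≠ 0 := by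
  intro h0
  rw [ZMod.intCast_zmod_eq_zero_iff_dvd] at h0
  exact hz (Int.eq_zero_of_abs_lt_dvd h0 h)

lemma natCast_ne_zero_of_lt (n : ℕ) (hn : n ≠ 0) (h : n < p) : (n : ZMod p) ≠ 0 := by
  have := intCast_ne_zero_of_abs_lt (p := p) (n : ℤ) (by exact_mod_cast hn)
    (by simpa using h)
  simpa using this

lemma eq_zero_of_derivative (G : (ZMod p)[X]) (hG : derivative G = 0) (hdeg : G.natDegree < p)
    (h0 : G.coeff 0 = 0) : G = 0 := by
  ext n
  rw [coeff_zero]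
  rcases n with _ | n
  · exact h0
  by_cases hn : n + 1 < p
  · have := congrArg (fun q => coeff q n) hG
    simp only [coeff_derivative, coeff_zero] at this
    have hc := natCast_ne_zero_of_lt (p := p) (n + 1) (by omega) hn
    push_cast at hc
    exact (mul_eq_zero.mp this).resolve_right hc
  · exact coeff_eq_zero_of_natDegree_lt (by omega)

/-- In degree less than `p`, a solution of `(T² - 1) G' = 2k T G` is determined by `G(0)`. -/
lemma eq_zero_of_ode (k : ℕ) (G : (ZMod p)[X])
    (hG : (X ^ 2 - 1) * derivative G = C (2 * (k : ZMod p)) * X * G) (hdeg : G.natDegree < p)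
    (h0 : G.coeff 0 = 0) : G = 0 := by
  have hp := (Fact.out : p.Prime).two_le
  have hG' : derivative G * X * X - derivative G = C (2 * (k : ZMod p)) * (G * X) := by
    linear_combination hG
  have key : ∀ n, G.coeff n = 0 ∧ G.coeff (n + 1) = 0 := by
    intro n
    induction n with
    | zero =>
      refine ⟨h0, ?_⟩
      have := congrArg (fun q => coeff q 0) hG'
      simpa [coeff_derivative] using this
    | succ n ih =>
      refine ⟨ih.2, ?_⟩
      by_cases hn : n + 2 < p
      · have := congrArg (fun q => coeff q (n + 1)) hG'
        simp only [coeff_sub, coeff_mul_X, coeff_C_mul, ih.1, mul_zero] at this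
        rcases n with _ | n
        · simp [coeff_derivative] at this
          have hc := natCast_ne_zero_of_lt (p := p) 2 (by omega) hn
          norm_num at hc this
          exact this.resolve_right hc
        · rw [coeff_mul_X] at this
          simp only [coeff_derivative, ih.1] at this
          have hc := natCast_ne_zero_of_lt (p := p) (n + 1 + 2) (by omega) hn
          push_cast at hc this
          have h2 : G.coeff (n + 1 + 1 + 1) * ((n : ZMod p) + 1 + 2) = 0 := by
            linear_combination -this
          exact (mul_eq_zero.mp h2).resolve_right hc
      · exact coeff_eq_zero_of_natDegree_lt (by omega)
  ext n
  simpa using (key n).1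

lemma Pk_monic (k : ℕ) : (Pk k : (ZMod p)[X]).Monic := by
  unfold Pk
  apply Monic.pow
  exact monic_X_pow_sub_C (1 : ZMod p) two_ne_zero

lemma Pk_natDegree (k : ℕ) : (Pk k : (ZMod p)[X]).natDegree = 2 * k := by
  unfold Pk
  have h : ((X : (ZMod p)[X]) ^ 2 - 1).natDegree = 2 := by
    simpa using natDegree_X_pow_sub_C (n := 2) (r := (1 : ZMod p))
  rw [natDegree_pow, h, mul_comm]

lemma Pk_succ (k : ℕ) : (Pk (k + 1) : (ZMod p)[X]) = Pk k * (X ^ 2 - 1) := pow_succ _ _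

lemma Pk_derivative (k : ℕ) :
    derivative (Pk (k + 1) : (ZMod p)[X]) = C (2 * ((k : ZMod p) + 1)) * X * Pk k := by
  unfold Pk
  simp only [derivative_pow, derivative_sub, derivative_X, derivative_one, map_mul, map_add,
    map_natCast, map_one, map_ofNat]
  push_cast
  simp
  ring

lemma polyInt_coeff_zero (f : (ZMod p)[X]) : (polyInt f).coeff 0 = 0 := by
  simp [polyInt, coeff_X_pow]

lemma polyInt_natDegree (f : (ZMod p)[X]) : (polyInt f).natDegree ≤ f.natDegree + 1 := by
  unfold polyInt
  apply natDegree_sum_le_of_forall_le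
  intro i hi
  refine (natDegree_C_mul_X_pow_le _ _).trans ?_
  simpa using Nat.lt_succ_iff.mp (Finset.mem_range.mp hi)

lemma polyInt_derivative (f : (ZMod p)[X]) (hf : f.natDegree + 1 < p) :
    derivative (polyInt f) = f := by
  conv_rhs => rw [f.as_sum_range_C_mul_X_pow]
  unfold polyInt
  rw [derivative_sum]
  apply Finset.sum_congr rfl
  intro i hi
  rw [derivative_C_mul_X_pow]
  have hc := natCast_ne_zero_of_lt (p := p) (i + 1) (by omega)
    (by have := Finset.mem_range.mp hi; omega)
  push_cast at hc
  congr 2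
  push_cast
  field_simp

lemma Qk_derivative (k : ℕ) (hk : 2 * k + 1 < p) :
    derivative (Qk (k + 1) : (ZMod p)[X]) = Pk k :=
  polyInt_derivative _ (by rw [Pk_natDegree]; simpa using hk)

lemma Qk_coeff_zero (k : ℕ) : (Qk k : (ZMod p)[X]).coeff 0 = 0 := polyInt_coeff_zero _

lemma Qk_natDegree (k : ℕ) : (Qk (k + 1) : (ZMod p)[X]).natDegree ≤ 2 * k + 1 := by
  refine (polyInt_natDegree _).trans ?_
  rw [Pk_natDegree]; simp

/-- Integration by parts: the reduction formula for `∫ (x² - 1)^k`. -/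
lemma Qk_rec (k : ℕ) (hk : 2 * k + 3 < p) :
    C (2 * (k : ZMod p) + 3) * Qk (k + 2) + C (2 * (k : ZMod p) + 2) * Qk (k + 1)
      = X * Pk (k + 1) := by
  rw [← sub_eq_zero]
  apply eq_zero_of_derivative
  · rw [derivative_sub, derivative_add, derivative_C_mul, derivative_C_mul, derivative_mul,
      derivative_X, Qk_derivative (k + 1) (by omega), Qk_derivative k (by omega), Pk_derivative,
      Pk_succ]
    simp only [map_add, map_mul, map_natCast, map_ofNat, map_one]
    ring
  · have h1 : (X * Pk (k + 1) : (ZMod p)[X]).natDegree ≤ 2 * k + 3 := by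
      refine natDegree_mul_le.trans ?_
      rw [Pk_natDegree, natDegree_X]; omega
    have h2 : (C (2 * (k : ZMod p) + 3) * Qk (k + 2)).natDegree ≤ 2 * k + 3 :=
      (natDegree_C_mul_le _ _).trans ((Qk_natDegree (k + 1)).trans (by omega))
    have h3 : (C (2 * (k : ZMod p) + 2) * Qk (k + 1)).natDegree ≤ 2 * k + 3 :=
      (natDegree_C_mul_le _ _).trans ((Qk_natDegree k).trans (by omega))
    refine lt_of_le_of_lt (natDegree_sub_le_of_le (natDegree_add_le_of_degree_le h2 h3) h1) ?_
    simpa using hk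
  · simp [Qk_coeff_zero]

lemma theta_succ (k : ℕ) :
    theta (ZMod p) (k + 1) = -(1 - (2 * ((k : ZMod p) + 1))⁻¹) * theta (ZMod p) k := by
  unfold theta
  rw [Finset.prod_Icc_succ_top (by omega)]
  push_cast
  ring

/-- The value of the beta integral `Q_k(1) = ∫₀¹ (x² - 1)^(k-1) dx`, and the oddness of `Q_k`
at `T = 1`. -/
lemma Qk_eval (k : ℕ) (hk : 2 * k + 2 < p) :
    (Qk (k + 1) : (ZMod p)[X]).eval 1 * (2 * ((k : ZMod p) + 1) * theta (ZMod p) (k + 1)) = -1 ∧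
      (Qk (k + 1) : (ZMod p)[X]).eval (-1) = -(Qk (k + 1) : (ZMod p)[X]).eval 1 := by
  induction k with
  | zero =>
    have h2 := natCast_ne_zero_of_lt (p := p) 2 (by omega) (by omega)
    push_cast at h2
    constructor
    · simp [Qk, Pk, polyInt, theta]
      field_simp
      norm_num
    · simp [Qk, Pk, polyInt]
  | succ k ih =>
    obtain ⟨h1, h2⟩ := ih (by omega)
    have hr := Qk_rec (p := p) k (by omega)
    have e1 := congrArg (eval 1) hr
    have e2 := congrArg (eval (-1)) hr
    have hP : (Pk (k + 1) : (ZMod p)[X]).eval 1 = 0 := by simp [Pk]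
    have hP' : (Pk (k + 1) : (ZMod p)[X]).eval (-1) = 0 := by simp [Pk]
    simp only [eval_add, eval_mul, eval_C, eval_X, hP, hP', mul_zero] at e1 e2
    have c3 := natCast_ne_zero_of_lt (p := p) (2 * k + 3) (by omega) (by omega)
    have c2 := natCast_ne_zero_of_lt (p := p) (2 * (k + 2)) (by omega) (by omega)
    push_cast at c2 c3
    constructor
    · rw [theta_succ]
      push_cast
      have hh : (2 * ((k : ZMod p) + 1 + 1)) * (-(1 - (2 * ((k : ZMod p) + 1 + 1))⁻¹)) =
          -(2 * (k : ZMod p) + 3) := by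
        have : (2 * ((k : ZMod p) + 1 + 1)) ≠ 0 := by convert c2 using 1; ring
        rw [mul_neg, mul_sub, mul_inv_cancel₀ this]
        ring
      linear_combination ((Qk (k + 2) : (ZMod p)[X]).eval 1 * theta (ZMod p) (k + 1)) * hh
        - theta (ZMod p) (k + 1) * e1 + h1
    · apply mul_left_cancel₀ c3
      rw [h2] at e2
      linear_combination e1 + e2

/-- Division of `T^p` by `P_i`: the remainder has derivative divisible by `P_{i-1}`, hence is a
multiple of `Q_i`, and the factor is found by evaluating at `T = ± 1`. -/
lemma X_pow_eq (i : ℕ) (hi : 2 * i + 2 < p) :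
    (X ^ p : (ZMod p)[X]) = Aseq (ZMod p) p (i + 1) 1 * Pk (i + 1)
      + C (-(2 * ((i : ZMod p) + 1) * theta (ZMod p) (i + 1))) * Qk (i + 1) := by
  obtain ⟨hQ1, hQ2⟩ := Qk_eval (p := p) i hi
  set q : (ZMod p)[X] := Qk (i + 1) with hq
  set A : (ZMod p)[X] := Aseq (ZMod p) p (i + 1) 1 with hA
  set r : (ZMod p)[X] := X ^ p % Pk (i + 1) with hr
  have hPd := Pk_natDegree (p := p) (i + 1)
  have hdiv : (X ^ p : (ZMod p)[X]) = A * Pk (i + 1) + r := by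
    have := EuclideanDomain.div_add_mod (X ^ p : (ZMod p)[X]) (Pk (i + 1))
    rw [← this, mul_comm]
    rfl
  have hrdeg : r.natDegree < 2 * i + 2 := by
    have := natDegree_mod_lt (X ^ p : (ZMod p)[X]) (q := Pk (i + 1)) (by rw [hPd]; omega)
    rw [hPd] at this
    exact this
  have hder : derivative r =
      Pk i * (-(derivative A * (X ^ 2 - 1) + A * (C (2 * ((i : ZMod p) + 1)) * X))) := by
    have := congrArg derivative hdiv
    rw [derivative_X_pow, derivative_add, derivative_mul, Pk_derivative, Pk_succ] at this
    simp only [CharP.cast_eq_zero, map_zero, zero_mul] at this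
    linear_combination -this
  obtain ⟨c, hc⟩ : ∃ c : ZMod p, derivative r = C c * Pk i := by
    set w := (-(derivative A * (X ^ 2 - 1) + A * (C (2 * ((i : ZMod p) + 1)) * X)))
    by_cases hw : w = 0
    · exact ⟨0, by rw [hder, hw]; simp⟩
    · have h1 : (derivative r).natDegree = 2 * i + w.natDegree := by
        rw [hder, (Pk_monic i).natDegree_mul' hw, Pk_natDegree]
      have h2 := natDegree_derivative_le r
      have h3 : w.natDegree = 0 := by omega
      rw [natDegree_eq_zero] at h3
      obtain ⟨c, hc⟩ := h3
      exact ⟨c, by rw [hder, ← hc, mul_comm]⟩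
  have hrq : r - C c * q - C (r.coeff 0) = 0 := by
    apply eq_zero_of_derivative
    · rw [derivative_sub, derivative_sub, derivative_C_mul, Qk_derivative i (by omega), hc]
      simp
    · have h1 : (C c * q).natDegree ≤ 2 * i + 1 :=
        (natDegree_C_mul_le _ _).trans (Qk_natDegree i)
      have h2 : (C (r.coeff 0)).natDegree ≤ 2 * i + 1 := by simp
      have := natDegree_sub_le_of_le
        (natDegree_sub_le_of_le (show r.natDegree ≤ 2 * i + 1 by omega) h1) h2
      refine lt_of_le_of_lt this ?_
      simp only [max_self]; omega
    · simp [hq, Qk_coeff_zero]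
  have hP : (Pk (i + 1) : (ZMod p)[X]).eval 1 = 0 := by simp [Pk]
  have hP' : (Pk (i + 1) : (ZMod p)[X]).eval (-1) = 0 := by simp [Pk]
  have hodd : Odd p := (Fact.out : p.Prime).odd_of_ne_two (by omega)
  have e1 := congrArg (eval 1) hdiv
  have e2 := congrArg (eval (-1)) hdiv
  have f1 := congrArg (eval 1) hrq
  have f2 := congrArg (eval (-1)) hrq
  simp only [eval_add, eval_sub, eval_mul, eval_C, eval_pow, eval_X, hP, hP', mul_zero, one_pow,
    hodd.neg_one_pow, zero_add, eval_zero, hQ2] at e1 e2 f1 f2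
  have two := natCast_ne_zero_of_lt (p := p) 2 (by omega) (by omega)
  push_cast at two
  have hr0 : r.coeff 0 = 0 := by
    apply mul_left_cancel₀ two
    linear_combination -f1 - f2 - e1 - e2
  have hcv : c = -(2 * ((i : ZMod p) + 1) * theta (ZMod p) (i + 1)) := by
    have : c * eval 1 q = 1 := by rw [hr0] at f1; linear_combination -f1 - e1
    linear_combination c * hQ1 - (2 * ((i : ZMod p) + 1) * theta (ZMod p) (i + 1)) * this
  rw [hr0] at hrq
  rw [← hcv]
  rw [map_zero] at hrq
  linear_combination hdiv + hrq

/-! ### The continued fraction of `P_k / Q_k` -/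

/-- The list `v₁ T, …, vₙ T`. -/
def linList (v : ℕ → ZMod p) (n : ℕ) : List (ZMod p)[X] :=
  (List.range n).map fun m => C (v (m + 1)) * X

lemma linList_succ (v : ℕ → ZMod p) (n : ℕ) :
    linList v (n + 1) = linList v n ++ [C (v (n + 1)) * X] := by
  simp [linList, List.range_succ]

lemma linProd_succ (v : ℕ → ZMod p) (n : ℕ) (j : Fin 2) :
    cfProd (linList v (n + 1)) j 0 =
        cfProd (linList v n) j 0 * (C (v (n + 1)) * X) + cfProd (linList v n) j 1 ∧
      cfProd (linList v (n + 1)) j 1 = cfProd (linList v n) j 0 := by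
  rw [linList_succ, cfProd_append, cfProd_singleton]
  exact mul_cfMat_apply _ _ _

lemma linProd_natDegree (v : ℕ → ZMod p) (n : ℕ) :
    (cfProd (linList v n) 0 0).natDegree ≤ n ∧
      (cfProd (linList v n) 0 1).natDegree ≤ n := by
  induction n with
  | zero => simp [linList, cfProd]
  | succ n ih =>
    rw [(linProd_succ v n 0).1, (linProd_succ v n 0).2]
    refine ⟨?_, ih.1.trans (by omega)⟩
    apply natDegree_add_le_of_degree_le
    · refine natDegree_mul_le.trans ?_
      have := natDegree_C_mul_le (v (n + 1)) X
      rw [natDegree_X] at this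
      omega
    · exact ih.2.trans (by omega)

lemma linProd_coeff_zero (v : ℕ → ZMod p) (n : ℕ) :
    (cfProd (linList v (2 * n)) 0 0).coeff 0 = 1 ∧
      (cfProd (linList v (2 * n)) 0 1).coeff 0 = 0 := by
  induction n with
  | zero => simp [linList, cfProd]
  | succ n ih =>
    rw [show 2 * (n + 1) = 2 * n + 1 + 1 by ring, (linProd_succ v (2 * n + 1) 0).1,
      (linProd_succ v (2 * n + 1) 0).2, (linProd_succ v (2 * n) 0).1,
      (linProd_succ v (2 * n) 0).2]
    simp [ih.1, ih.2]

/-- With `v_m = (2k - 2m + 1) u_m` and `u_{m+1} u_m m (2k - m) = 1`, consecutive continuants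
`S_m = K(v₁ T, …, v_m T)` satisfy a closed first-order differential system. -/
lemma linProd_ode (k : ℕ) (u v : ℕ → ZMod p)
    (hv : ∀ m, 1 ≤ m → m ≤ 2 * k → v m = (2 * k - 2 * m + 1) * u m)
    (hu : ∀ m, 1 ≤ m → m < 2 * k → u (m + 1) * u m * (m * (2 * k - m)) = 1)
    (hu1 : u 1 ≠ 0) (n : ℕ) (hn : n + 1 ≤ 2 * k) :
    (X ^ 2 - 1) * derivative (cfProd (linList v (n + 1)) 0 0) =
        C ((n : ZMod p) + 1) * X * cfProd (linList v (n + 1)) 0 0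
          - C (((n : ZMod p) + 1) * (2 * k - (n + 1)) * u (n + 1))
            * cfProd (linList v (n + 1)) 0 1 ∧
      (X ^ 2 - 1) * derivative (cfProd (linList v (n + 1)) 0 1) =
        C (2 * (k : ZMod p) - (n + 1)) * X * cfProd (linList v (n + 1)) 0 1
          - C (u (n + 1))⁻¹ * cfProd (linList v (n + 1)) 0 0 := by
  induction n with
  | zero =>
    have h1 := hv 1 le_rfl hn
    rw [(linProd_succ v _ 0).1, (linProd_succ v _ 0).2]
    have hc : C (u 1)⁻¹ * C (u 1) = (1 : (ZMod p)[X]) := by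
      rw [← C_mul, inv_mul_cancel₀ hu1, C_1]
    simp only [linList, List.range_zero, List.map_nil, cfProd_nil, Matrix.one_apply_eq, zero_add,
      one_mul, derivative_C_mul, derivative_X, derivative_one, h1,
      Matrix.one_apply_ne (show (0 : Fin 2) ≠ 1 by decide), add_zero]
    simp only [map_add, map_mul, map_sub, map_natCast, map_ofNat, map_one, Nat.cast_zero,
      Nat.cast_one, map_zero]
    constructor
    · ring
    · linear_combination (2 * (k : (ZMod p)[X]) - 1) * X * hc
  | succ n ih =>
    obtain ⟨i1, i2⟩ := ih (by omega)
    have h1 := hv (n + 1 + 1) (by omega) hn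
    have hu' := hu (n + 1) (by omega) (by omega)
    rw [(linProd_succ v (n + 1) 0).1, (linProd_succ v (n + 1) 0).2]
    set S := cfProd (linList v (n + 1)) 0 0
    set S' := cfProd (linList v (n + 1)) 0 1
    have hinv : (u (n + 1 + 1))⁻¹ = u (n + 1) * ((n + 1) * (2 * k - (n + 1))) := by
      apply inv_eq_of_mul_eq_one_left
      push_cast at hu'
      linear_combination hu'
    have hC := congrArg (C : ZMod p → (ZMod p)[X]) hu'
    have hn0 : u (n + 1) ≠ 0 := by
      intro h; rw [h] at hu'; simp at hu'
    -- the relation `u_{n+2} (n+1) (2k-n-1) = u_{n+1}⁻¹`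
    have hC2 : C (u (n + 1 + 1)) * (((n : (ZMod p)[X]) + 1) * (2 * k - (n + 1)))
        = C (u (n + 1))⁻¹ := by
      have : u (n + 1 + 1) * (((n : ZMod p) + 1) * (2 * k - (n + 1))) = (u (n + 1))⁻¹ := by
        field_simp
        push_cast at hu'
        linear_combination hu'
      rw [← this]
      simp only [map_add, map_mul, map_sub, map_natCast, map_ofNat, map_one]
    rw [hinv, h1]
    simp only [derivative_add, derivative_mul, derivative_C, derivative_X]
    simp only [map_add, map_mul, map_sub, map_natCast, map_ofNat, map_one, Nat.cast_add,
      Nat.cast_one] at hC i1 i2 ⊢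
    constructor
    · linear_combination (C (u (n + 1 + 1)) * (2 * k - 2 * (n + 1 + 1) + 1) * X) * i1 + i2
        + S * hC2 - (2 * k - 2 * (n + 1 + 1) + 1) * X * S' * hC
    · linear_combination i1 + (2 * k - 2 * (n + 1 + 1) + 1) * X * S * hC

/-- At `m = 2k` the differential system decouples: `(T² - 1) S' = 2k T S`, which forces
`S = ± P_k`, and the other continuant has derivative proportional to `P_{k-1}`, which forces it
to be a multiple of `Q_k`. (Stated for `k + 1` in place of `k`.) -/
lemma linProd_row (k : ℕ) (hk : 2 * k + 2 < p) (u v : ℕ → ZMod p)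
    (hv : ∀ m, 1 ≤ m → m ≤ 2 * (k + 1) → v m = (2 * (k + 1 : ℕ) - 2 * m + 1) * u m)
    (hu : ∀ m, 1 ≤ m → m < 2 * (k + 1) →
      u (m + 1) * u m * (m * (2 * (k + 1 : ℕ) - m)) = 1)
    (hu1 : u 1 ≠ 0) :
    cfProd (linList v (2 * (k + 1))) 0 0 = (-1) ^ (k + 1) * Pk (k + 1) ∧
      cfProd (linList v (2 * (k + 1))) 0 1 =
        -C (u (2 * (k + 1)))⁻¹ * (-1) ^ (k + 1) * Qk (k + 1) := by
  obtain ⟨h1, h2⟩ := linProd_ode (k + 1) u v hv hu hu1 (2 * k + 1) (by omega)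
  obtain ⟨z1, z2⟩ := linProd_coeff_zero v (k + 1)
  obtain ⟨d1, d2⟩ := linProd_natDegree v (2 * (k + 1))
  rw [show 2 * k + 1 + 1 = 2 * (k + 1) by ring] at h1 h2
  set S := cfProd (linList v (2 * (k + 1))) 0 0
  set S' := cfProd (linList v (2 * (k + 1))) 0 1
  have hd : ∀ j : ℕ, ((-1 : (ZMod p)[X]) ^ j) = C ((-1) ^ j) := by intro j; simp
  have e1 : S = (-1) ^ (k + 1) * Pk (k + 1) := by
    rw [← sub_eq_zero]
    apply eq_zero_of_ode (k + 1)
    · rw [hd, derivative_sub, derivative_C_mul, Pk_derivative, mul_sub, h1, Pk_succ]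
      push_cast
      simp only [map_add, map_mul, map_sub, map_natCast, map_ofNat, map_one]
      ring
    · refine lt_of_le_of_lt (natDegree_sub_le_of_le d1 (n := 2 * (k + 1)) ?_) (by simp; omega)
      rw [hd]
      exact (natDegree_C_mul_le _ _).trans (Pk_natDegree _).le
    · rw [coeff_sub, z1, hd, coeff_C_mul, coeff_zero_eq_eval_zero]
      simp [Pk, ← mul_pow]
  refine ⟨e1, ?_⟩
  have hne : (X ^ 2 - 1 : (ZMod p)[X]) ≠ 0 := by
    have := (Pk_monic (p := p) 1).ne_zero
    simpa [Pk] using this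
  rw [← sub_eq_zero]
  apply eq_zero_of_derivative
  · apply mul_left_cancel₀ hne
    rw [hd, ← C_neg, ← C_mul, derivative_sub, derivative_C_mul, Qk_derivative k (by omega),
      mul_sub, h2, e1, Pk_succ]
    push_cast
    simp only [map_add, map_mul, map_sub, map_natCast, map_ofNat, map_one, map_neg, map_pow]
    ring
  · refine lt_of_le_of_lt (natDegree_sub_le_of_le d2 (n := 2 * (k + 1)) ?_) (by simp; omega)
    rw [hd, ← C_neg, ← C_mul]
    exact (natDegree_C_mul_le _ _).trans ((Qk_natDegree _).trans (by omega))
  · rw [hd, ← C_neg, ← C_mul, coeff_sub, z2, coeff_C_mul, Qk_coeff_zero]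
    simp

lemma linList_reverse (v : ℕ → ZMod p) (n : ℕ) :
    (linList v n).reverse = linList (fun m => v (n + 1 - m)) n := by
  apply List.ext_getElem
  · simp [linList]
  · intro m h1 h2
    simp only [linList, List.length_reverse, List.length_map, List.length_range] at h1
    simp only [linList, List.getElem_reverse, List.getElem_map, List.getElem_range,
      List.length_map, List.length_range]
    rw [show n - 1 - m + 1 = n + 1 - (m + 1) by omega]

/-! ### The constants `v_{m,k}` and `[v_{j,k}, …, v_{1,k}]` -/

lemma vseq_succ (k m : ℕ) (hm : 1 ≤ m) :
    vseq (ZMod p) k (m + 1) = (2 * k - 2 * m - 1) * (2 * k - 2 * m + 1) *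
      ((m : ZMod p) * (2 * k - m))⁻¹ * (vseq (ZMod p) k m)⁻¹ := by
  obtain ⟨m, rfl⟩ := Nat.exists_eq_add_of_le' hm
  rw [vseq]
  · push_cast
    ring
  · omega

lemma vfactor_ne_zero (k m : ℕ) (hk : 2 * k < p) (h1 : 1 ≤ m) (h2 : m ≤ 2 * k) :
    (2 * (k : ZMod p) - 2 * m + 1) ≠ 0 := by
  have := intCast_ne_zero_of_abs_lt (p := p) (2 * k - 2 * m + 1) (by omega)
    (by rw [abs_lt]; omega)
  push_cast at this
  exact this

lemma vden_ne_zero (k m : ℕ) (hk : 2 * k < p) (h1 : 1 ≤ m) (h2 : m < 2 * k) :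
    (m : ZMod p) ≠ 0 ∧ (2 * (k : ZMod p) - m) ≠ 0 := by
  have := intCast_ne_zero_of_abs_lt (p := p) (2 * k - m) (by omega)
    (by rw [abs_lt]; omega)
  push_cast at this
  exact ⟨natCast_ne_zero_of_lt m (by omega) (by omega), this⟩

lemma vseq_ne_zero (k : ℕ) (hk : 2 * k < p) (m : ℕ) (h1 : 1 ≤ m) (h2 : m ≤ 2 * k) :
    vseq (ZMod p) k m ≠ 0 := by
  induction m, h1 using Nat.le_induction with
  | base =>
    have := vfactor_ne_zero k 1 hk le_rfl h2
    rw [vseq]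
    convert this using 1
    push_cast; ring
  | succ m hm ih =>
    rw [vseq_succ k m hm]
    have d := vden_ne_zero k m hk hm (by omega)
    have a := vfactor_ne_zero k m hk hm (by omega)
    have b := vfactor_ne_zero k (m + 1) hk (by omega) h2
    have b' : (2 * (k : ZMod p) - 2 * m - 1) ≠ 0 := by
      convert b using 1; push_cast; ring
    exact mul_ne_zero (mul_ne_zero (mul_ne_zero b' a) (inv_ne_zero (mul_ne_zero d.1 d.2)))
      (inv_ne_zero (ih (by omega)))

/-- The normalised constants `v_{m,k} / (2k - 2m + 1)`. -/
def useq (p : ℕ) [Fact p.Prime] (k m : ℕ) : ZMod p := vseq (ZMod p) k m / (2 * k - 2 * m + 1)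

lemma vseq_eq_useq (k m : ℕ) (hk : 2 * k < p) (h1 : 1 ≤ m) (h2 : m ≤ 2 * k) :
    vseq (ZMod p) k m = (2 * k - 2 * m + 1) * useq p k m := by
  have := vfactor_ne_zero k m hk h1 h2
  unfold useq
  rw [← mul_div_assoc, mul_div_cancel_left₀ _ this]

lemma useq_rec (k m : ℕ) (hk : 2 * k < p) (h1 : 1 ≤ m) (h2 : m < 2 * k) :
    useq p k (m + 1) * useq p k m * ((m : ZMod p) * (2 * k - m)) = 1 := by
  have a := vfactor_ne_zero k m hk h1 h2.le
  have b := vfactor_ne_zero k (m + 1) hk (by omega) h2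
  have d := vden_ne_zero k m hk h1 h2
  have hv := vseq_ne_zero k hk m h1 h2.le
  have b' : (2 * (k : ZMod p) - 2 * m - 1) ≠ 0 := by
    convert b using 1; push_cast; ring
  have hd := d.1
  have hd' := d.2
  unfold useq
  rw [vseq_succ k m h1, show (2 * (k : ZMod p) - 2 * ((m + 1 : ℕ) : ZMod p) + 1) =
    2 * k - 2 * m - 1 by push_cast; ring]
  generalize 2 * (k : ZMod p) - 2 * m - 1 = x at *
  generalize 2 * (k : ZMod p) - 2 * m + 1 = y at *
  field_simp

lemma useq_one (k : ℕ) (hk : 2 * k < p) (h1 : 1 ≤ k) : useq p k 1 = (1 : ZMod p) := by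
  have := vfactor_ne_zero k 1 hk le_rfl (by omega)
  unfold useq
  rw [vseq, div_eq_one_iff_eq this]
  push_cast; ring

/-- The finite continued fraction `[v_{j,k}, …, v_{1,k}]`; it is `0` for `j = 0`. -/
def fseq (p : ℕ) [Fact p.Prime] (k j : ℕ) : ZMod p :=
  fcf ((List.range j).map fun m => vseq (ZMod p) k (j - m))

/-- The recursion also covers `j = 0`, since `fseq p k 0 = 0` and `0⁻¹ = 0`. -/
lemma fseq_succ (k j : ℕ) :
    fseq p k (j + 1) = vseq (ZMod p) k (j + 1) + (fseq p k j)⁻¹ := by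
  unfold fseq
  rw [List.range_succ_eq_map, List.map_cons, List.map_map]
  have : ((fun m => vseq (ZMod p) k (j + 1 - m)) ∘ Nat.succ) =
      fun m => vseq (ZMod p) k (j - m) := by
    funext m; simp
  rw [this]
  rcases j with _ | j
  · simp [fcf]
  · rw [List.range_succ_eq_map, List.map_cons, fcf]
    simp

/-- The closed form `[v_{j,k}, …, v_{1,k}] = (2k - j) u_j`, where `u_j = v_{j,k} / (2k - 2j + 1)`.
-/
lemma fseq_eq (k j : ℕ) (hk : 2 * k < p) (h1 : 1 ≤ j) (h2 : j ≤ 2 * k) :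
    fseq p k j = (2 * (k : ZMod p) - j) * useq p k j := by
  induction j, h1 using Nat.le_induction with
  | base =>
    have h := vseq_eq_useq k 1 hk le_rfl h2
    have h0 : fseq p k 0 = 0 := rfl
    rw [fseq_succ, h, h0, inv_zero]
    push_cast
    ring
  | succ j hj ih =>
    have d := vden_ne_zero k j hk hj (by omega)
    have hu := useq_rec k j hk hj (by omega)
    have hu0 : useq p k j ≠ (0 : ZMod p) := by
      intro h; rw [h] at hu; simp at hu
    rw [fseq_succ, ih (by omega), vseq_eq_useq k (j + 1) hk (by omega) h2]
    have : ((2 * (k : ZMod p) - j) * useq p k j)⁻¹ = useq p k (j + 1) * j := by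
      apply inv_eq_of_mul_eq_one_left
      linear_combination hu
    rw [this]
    push_cast
    ring

lemma fseq_ne_zero (k j : ℕ) (hk : 2 * k < p) (h1 : 1 ≤ j) (h2 : j < 2 * k) :
    fseq p k j ≠ (0 : ZMod p) := by
  rw [fseq_eq k j hk h1 h2.le]
  have hu := useq_rec k j hk h1 h2
  refine mul_ne_zero (vden_ne_zero k j hk h1 h2).2 ?_
  intro h; rw [h] at hu; simp at hu

/-- The last value vanishes; this is what makes the final block a single partial quotient. -/
lemma fseq_last (k : ℕ) (hk : 2 * k < p) (h1 : 1 ≤ k) : fseq p k (2 * k) = (0 : ZMod p) := by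
  rw [fseq_eq k (2 * k) hk (by omega) le_rfl]
  push_cast
  ring

/-- The matrix of `[v_{1,k} T, …, v_{2k,k} T]`. The first row comes from the differential system,
the first column from the same system for the reversed sequence, and the constant
`4 k² θ_k²` from the determinant at `T = 1`. -/
lemma vProd (k : ℕ) (hk : 2 * k < p) (h1 : 1 ≤ k) :
    let V := cfProd (linList (vseq (ZMod p) k) (2 * k))
    V 0 0 = (-1) ^ k * Pk k ∧
    V 0 1 = -C ((2 * (k : ZMod p) * theta (ZMod p) k) ^ 2) * (-1) ^ k * Qk k ∧
    V 1 0 = (-1) ^ k * Qk k ∧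
    V 0 0 * V 1 1 - V 0 1 * V 1 0 = 1 := by
  intro V
  obtain ⟨k, rfl⟩ := Nat.exists_eq_add_of_le' h1
  have hu1 := useq_one (p := p) (k + 1) hk h1
  obtain ⟨r1, r2⟩ := linProd_row k hk (useq p (k + 1)) (vseq (ZMod p) (k + 1))
    (fun m h1 h2 => vseq_eq_useq _ m hk h1 h2) (fun m h1 h2 => useq_rec _ m hk h1 h2)
    (by rw [hu1]; exact one_ne_zero)
  have hcast : ∀ m, m ≤ 2 * (k + 1) + 1 → ((2 * (k + 1) + 1 - m : ℕ) : ZMod p) =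
      2 * (k + 1 : ℕ) + 1 - m := by
    intro m hm
    push_cast [Nat.cast_sub hm]
    ring
  obtain ⟨-, c2⟩ := linProd_row k hk (fun m => -useq p (k + 1) (2 * (k + 1) + 1 - m))
    (fun m => vseq (ZMod p) (k + 1) (2 * (k + 1) + 1 - m))
    (fun m h1 h2 => by
      have := vseq_eq_useq (p := p) (k + 1) (2 * (k + 1) + 1 - m) hk (by omega) (by omega)
      rw [hcast m (by omega)] at this
      rw [this]
      ring)
    (fun m h1 h2 => by
      have := useq_rec (p := p) (k + 1) (2 * (k + 1) - m) hk (by omega) (by omega)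
      rw [show 2 * (k + 1) - m + 1 = 2 * (k + 1) + 1 - m by omega,
        show 2 * (k + 1) - m = 2 * (k + 1) + 1 - (m + 1) by omega, hcast (m + 1) (by omega)] at this
      rw [← this]
      push_cast
      ring)
    (by
      have := useq_rec (p := p) (k + 1) (2 * k + 1) hk (by omega) (by omega)
      intro h
      simp only [show 2 * (k + 1) + 1 - 1 = 2 * k + 1 + 1 by omega, neg_eq_zero] at h
      rw [h] at this
      simp at this)
  have e10 : V 1 0 = (-1) ^ (k + 1) * Qk (k + 1) := by
    have : V 1 0 = cfProd (linList (fun m => vseq (ZMod p) (k + 1) (2 * (k + 1) + 1 - m))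
        (2 * (k + 1))) 0 1 := by
      rw [← linList_reverse, cfProd_reverse]; rfl
    rw [this, c2]
    simp only [show 2 * (k + 1) + 1 - 2 * (k + 1) = 1 by omega, hu1]
    simp
  have hdet : V 0 0 * V 1 1 - V 0 1 * V 1 0 = 1 := by
    rw [← Matrix.det_fin_two]
    change (cfProd _).det = 1
    rw [cfProd_det]
    simp [linList]
  refine ⟨r1, ?_, e10, hdet⟩
  have r1' : V 0 0 = (-1) ^ (k + 1) * Pk (k + 1) := r1
  have r2' : V 0 1 = -C (useq p (k + 1) (2 * (k + 1)))⁻¹ * (-1) ^ (k + 1) * Qk (k + 1) := r2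
  obtain ⟨q1, -⟩ := Qk_eval (p := p) k hk
  have hE := congrArg (eval 1) hdet
  have hP : (Pk (k + 1) : (ZMod p)[X]).eval 1 = 0 := by simp [Pk]
  rw [r1', r2', e10] at hE
  simp only [eval_sub, eval_mul, hP, eval_neg, eval_C, eval_pow, eval_one] at hE
  have hs : ((-1 : ZMod p) ^ (k + 1)) * (-1) ^ (k + 1) = 1 := by rw [← mul_pow]; simp
  rw [r2']
  have : (useq p (k + 1) (2 * (k + 1)))⁻¹ =
      (2 * ((k + 1 : ℕ) : ZMod p) * theta (ZMod p) (k + 1)) ^ 2 := by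
    push_cast
    set a := (useq p (k + 1) (2 * (k + 1)) : ZMod p)⁻¹
    set Q1 := (Qk (k + 1) : (ZMod p)[X]).eval 1
    set B := 2 * ((k : ZMod p) + 1) * theta (ZMod p) (k + 1)
    linear_combination B ^ 2 * hE - a * B ^ 2 * Q1 ^ 2 * hs - a * (Q1 * B - 1) * q1
  rw [this]

/-! ### The blocks -/

/-- The partial quotients `-δ^{(-1)^m} v_{m,i} T`, `1 ≤ m ≤ n`. -/
def twistList (i : ℕ) (d : ZMod p) (n : ℕ) : List (ZMod p)[X] :=
  (List.range n).map fun m =>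
    -(C (d ^ ((-1 : ℤ) ^ (m + 1)) * vseq (ZMod p) i (m + 1)) * X)

/-- Multiplying partial quotients alternately by `c` and `c⁻¹`, an even number of times,
conjugates the matrix product by `diag(c, 1)`; here `c = -δ⁻¹`. -/
lemma twistProd (i : ℕ) (d : ZMod p) (hd : d ≠ 0) (n : ℕ) :
    cfProd (twistList i d (2 * n)) =
      !![cfProd (linList (vseq (ZMod p) i) (2 * n)) 0 0,
          -C d⁻¹ * cfProd (linList (vseq (ZMod p) i) (2 * n)) 0 1;
        -C d * cfProd (linList (vseq (ZMod p) i) (2 * n)) 1 0,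
          cfProd (linList (vseq (ZMod p) i) (2 * n)) 1 1] := by
  have hC : C d * C d⁻¹ = (1 : (ZMod p)[X]) := by rw [← C_mul, mul_inv_cancel₀ hd, C_1]
  induction n with
  | zero =>
    simp [twistList, linList, cfProd, Matrix.one_fin_two]
  | succ n ih =>
    have hl : twistList i d (2 * (n + 1)) = twistList i d (2 * n) ++
        ([-(C (d⁻¹ * vseq (ZMod p) i (2 * n + 1)) * X)] ++
          [-(C (d * vseq (ZMod p) i (2 * n + 2)) * X)]) := by
      have o1 : (-1 : ℤ) ^ (2 * n + 1) = -1 := Odd.neg_one_pow ⟨n, rfl⟩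
      have o2 : (-1 : ℤ) ^ (2 * n + 1 + 1) = 1 := Even.neg_one_pow ⟨n + 1, by ring⟩
      rw [show 2 * (n + 1) = 2 * n + 1 + 1 by ring]
      simp [twistList, List.range_succ, o1, o2]
    rw [hl, cfProd_append, ih, cfProd_append, cfProd_singleton, cfProd_singleton]
    rw [show 2 * (n + 1) = 2 * n + 1 + 1 by ring]
    simp only [(linProd_succ _ (2 * n + 1) _).1, (linProd_succ _ (2 * n + 1) _).2,
      (linProd_succ _ (2 * n) _).1, (linProd_succ _ (2 * n) _).2]
    generalize cfProd (linList (vseq (ZMod p) i) (2 * n)) = V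
    simp only [cfMat, Matrix.mul_fin_two, map_mul]
    refine Matrix.ext fun a b => ?_
    fin_cases a <;> fin_cases b <;> simp
    · linear_combination (V 0 0 * C (vseq (ZMod p) i (2 * n + 1)) * X *
        (C (vseq (ZMod p) i (2 * n + 2)) * X) +
          V 0 1 * C (vseq (ZMod p) i (2 * n + 2)) * X) * hC
    · ring
    · linear_combination -(V 1 0 * X * C (vseq (ZMod p) i (2 * n + 1)) * C d *
        X * C (vseq (ZMod p) i (2 * n + 2))) * hC
    · linear_combination V 1 0 * C (vseq (ZMod p) i (2 * n + 1)) * X * hC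

/-- The `(j+1)`-st block of partial quotients. -/
def block (k i j : ℕ) : List (ZMod p)[X] :=
  (C (vseq (ZMod p) k (j + 1)) * Aseq (ZMod p) p i 1) ::
    twistList i (2 * i * theta (ZMod p) i * fseq p k (j + 1)) (2 * i)

/-- The matrix of `x ↦ (x + c f⁻¹ Q_i) / P_i`, where `c = -2 i θ_i` and
`f = [v_{j,k}, …, v_{1,k}]`. It carries the tails of `[v_{1,k} T^p, …, v_{2k,k} T^p]` to the
tails of the block continued fraction. For `j = 0` one has `f = 0` and, as `0⁻¹ = 0`, the matrix
is `diag(1, P_i)`. -/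
def linkMat (k i j : ℕ) : Matrix (Fin 2) (Fin 2) (ZMod p)[X] :=
  !![1, C (-(2 * i * theta (ZMod p) i) * (fseq p k j)⁻¹) * Qk i; 0, Pk i]

lemma const_ne_zero (i : ℕ) (hi : 1 ≤ i) (hi2 : 2 * i < p) :
    2 * (i : ZMod p) * theta (ZMod p) i ≠ 0 := by
  obtain ⟨i, rfl⟩ := Nat.exists_eq_add_of_le' hi
  have := (Qk_eval (p := p) i hi2).1
  intro h
  push_cast at h
  rw [h] at this
  simp at this

/-- One block of partial quotients, up to sign and the change of variable `linkMat`, amounts to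
the single partial quotient `v_{j+1,k} T^p`. This combines `T^p = A_{1,i} P_i - 2 i θ_i Q_i` with
the explicit matrix of `[v_{1,i} T, …, v_{2i,i} T]`. -/
lemma block_link (k i j : ℕ) (hk2 : 2 * k < p) (hi : 1 ≤ i) (hi2 : 2 * i < p)
    (hj : j + 1 < 2 * k) :
    cfProd (block k i j) * linkMat k i (j + 1) =
      ((-1 : (ZMod p)[X]) ^ i) •
        (linkMat k i j * cfMat (C (vseq (ZMod p) k (j + 1)) * X ^ p)) := by
  have hf := fseq_ne_zero (p := p) k (j + 1) hk2 (by omega) hj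
  have hc := const_ne_zero (p := p) i hi hi2
  have hXp : (X ^ p : (ZMod p)[X]) = Aseq (ZMod p) p i 1 * Pk i
      + C (-(2 * (i : ZMod p) * theta (ZMod p) i)) * Qk i := by
    obtain ⟨i, rfl⟩ := Nat.exists_eq_add_of_le' hi
    have := X_pow_eq (p := p) i hi2
    push_cast at this ⊢
    exact this
  have hfs := fseq_succ (p := p) k j
  obtain ⟨V00, V01, V10, hdet⟩ := vProd (p := p) i hi2 hi
  rw [linkMat, linkMat, block, cfProd_cons, twistProd _ _ (mul_ne_zero hc hf), V00, V01, V10]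
  rw [V00, V01, V10] at hdet
  set ν := cfProd (linList (vseq (ZMod p) i) (2 * i)) 1 1
  set c := 2 * (i : ZMod p) * theta (ZMod p) i
  set f := fseq p k (j + 1)
  have hv : vseq (ZMod p) k (j + 1) = f - (fseq p k j)⁻¹ := by rw [hfs]; ring
  rw [hXp, hv, mul_inv]
  set g := (fseq p k j)⁻¹
  have hcC : C c * C c⁻¹ = (1 : (ZMod p)[X]) := by rw [← C_mul, mul_inv_cancel₀ hc, C_1]
  have hfC : C f * C f⁻¹ = (1 : (ZMod p)[X]) := by rw [← C_mul, mul_inv_cancel₀ hf, C_1]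
  have hs : ((-1 : (ZMod p)[X]) ^ i) * (-1) ^ i = 1 := by rw [← mul_pow]; simp
  generalize (-1 : (ZMod p)[X]) ^ i = l at *
  generalize (Pk i : (ZMod p)[X]) = P at *
  generalize (Qk i : (ZMod p)[X]) = Q at *
  generalize Aseq (ZMod p) p i 1 = A at *
  simp only [cfMat, Matrix.mul_fin_two, map_mul, map_sub, map_neg, map_pow] at hdet ⊢
  have z : C c⁻¹ * C f⁻¹ * (C c ^ 2 * l * Q) = C c * C f⁻¹ * l * Q := by
    linear_combination C f⁻¹ * l * Q * C c * hcC
  -- the lower right entry of the twisted block times the link matrix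
  have w : l * Q ^ 2 * C c ^ 2 + ν * P = l := by
    linear_combination l * hdet - (ν * P + l * Q ^ 2 * C c ^ 2) * hs
  refine Matrix.ext fun a b => ?_
  fin_cases a <;> fin_cases b <;> simp
  · ring
  · linear_combination (C f - C g) * A * P * z + C c ^ 2 * l * Q ^ 2 * hfC + w
  · linear_combination P * z

/-- The relations of `block_link` telescope; the partial quotients `v_{j,k} T^p` are the images
of `v_{j,k} T` under Frobenius. -/
lemma blocks_link (k i : ℕ) (hk2 : 2 * k < p) (hi : 1 ≤ i) (hi2 : 2 * i < p) (n : ℕ)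
    (hn : n + 1 ≤ 2 * k) :
    cfProd ((List.range n).flatMap (block (p := p) k i)) * linkMat k i n =
      (((-1 : (ZMod p)[X]) ^ i) ^ n) •
        (linkMat k i 0 *
          (frobenius (ZMod p)[X] p).mapMatrix (cfProd (linList (vseq (ZMod p) k) n))) := by
  induction n with
  | zero => simp [cfProd, linList]
  | succ n ih =>
    rw [List.range_succ, List.flatMap_append, List.flatMap_singleton, cfProd_append,
      Matrix.mul_assoc, block_link k i n hk2 hi hi2 (by omega), Matrix.mul_smul,
      ← Matrix.mul_assoc, ih (by omega), linList_succ, cfProd_append, cfProd_singleton, map_mul,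
      Matrix.smul_mul, smul_smul, ← pow_succ', Matrix.mul_assoc]
    congr 3
    ext a b : 1
    fin_cases a <;> fin_cases b <;>
      simp [cfMat, frobenius_def, mul_pow, ← C_pow, (Fact.out : p.Prime).ne_zero]

/-- The complete list of partial quotients. -/
def blockList (k i : ℕ) : List (ZMod p)[X] :=
  (List.range (2 * k - 1)).flatMap (block (p := p) k i) ++
    [C (vseq (ZMod p) k (2 * k)) * Aseq (ZMod p) p i 1]

/-- Since `[v_{2k,k}, …, v_{1,k}] = 0`, the last link matrix is absorbed by the final partial
quotient, and the whole product is explicit. -/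
lemma blockList_prod (k i : ℕ) (hk : 1 ≤ k) (hk2 : 2 * k < p) (hi : 1 ≤ i) (hi2 : 2 * i < p) :
    cfProd (blockList (p := p) k i) * !![Pk i, 0; 0, 1] =
      (((-1 : (ZMod p)[X]) ^ i) ^ (2 * k - 1)) •
        (!![1, 0; 0, Pk i] *
          (frobenius (ZMod p)[X] p).mapMatrix
            (cfProd (linList (vseq (ZMod p) k) (2 * k)))) := by
  have hXp : (X ^ p : (ZMod p)[X]) = Aseq (ZMod p) p i 1 * Pk i
      + C (-(2 * (i : ZMod p) * theta (ZMod p) i)) * Qk i := by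
    obtain ⟨i, rfl⟩ := Nat.exists_eq_add_of_le' hi
    have := X_pow_eq (p := p) i hi2
    push_cast at this ⊢
    exact this
  have h0 : linkMat (p := p) k i 0 = !![1, 0; 0, Pk i] := by
    have : fseq p k 0 = 0 := rfl
    rw [linkMat, this]; simp
  obtain ⟨n, hn⟩ : ∃ n, 2 * k = n + 1 := ⟨2 * k - 1, by omega⟩
  have hlast := fseq_last (p := p) k hk2 hk
  have hb := blocks_link (p := p) k i hk2 hi hi2 n (by omega)
  rw [hn, fseq_succ] at hlast
  have hv : vseq (ZMod p) k (n + 1) = -(fseq p k n)⁻¹ := eq_neg_of_add_eq_zero_left hlast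
  have hfr : (frobenius (ZMod p)[X] p).mapMatrix (cfMat (C (vseq (ZMod p) k (n + 1)) * X)) =
      cfMat (C (vseq (ZMod p) k (n + 1)) * X ^ p) := by
    ext a b : 1
    fin_cases a <;> fin_cases b <;>
      simp [cfMat, frobenius_def, mul_pow, ← C_pow, (Fact.out : p.Prime).ne_zero]
  have key : cfMat (C (vseq (ZMod p) k (n + 1)) * Aseq (ZMod p) p i 1) * !![Pk i, 0; 0, 1] =
      linkMat k i n * cfMat (C (vseq (ZMod p) k (n + 1)) * X ^ p) := by
    rw [hv, hXp, linkMat]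
    generalize (Pk i : (ZMod p)[X]) = P
    generalize (Qk i : (ZMod p)[X]) = Q
    generalize Aseq (ZMod p) p i 1 = A
    simp only [cfMat, Matrix.mul_fin_two, map_mul, map_neg]
    refine Matrix.ext fun a b => ?_
    fin_cases a <;> fin_cases b <;> simp
    ring
  rw [h0] at hb
  rw [blockList, hn, Nat.add_sub_cancel, cfProd_append, cfProd_singleton, Matrix.mul_assoc, key,
    ← Matrix.mul_assoc, hb, linList_succ, cfProd_append, cfProd_singleton, map_mul, hfr,
    Matrix.smul_mul, Matrix.mul_assoc]

/-- The entries of `M` read off from the shape of the identity in `blockList_prod`. -/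
lemma entries_of_diag {R : Type*} [CommRing R] (M N : Matrix (Fin 2) (Fin 2) R) (P e : R)
    (h : M * !![P, 0; 0, 1] = e • (!![1, 0; 0, P] * N)) :
    M 0 0 * P = e * N 0 0 ∧ M 1 0 * P = e * (P * N 1 0) ∧ M 0 1 = e * N 0 1 := by
  have h00 := congrFun (congrFun h 0) 0
  have h10 := congrFun (congrFun h 1) 0
  have h01 := congrFun (congrFun h 0) 1
  simp only [Matrix.smul_apply, Matrix.mul_apply, Fin.sum_univ_two, smul_eq_mul] at h00 h10 h01
  simp at h00 h10 h01
  exact ⟨h00, h10, h01⟩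

lemma Aseq_degree_pos (i : ℕ) (hi : 1 ≤ i) (hi2 : 2 * i < p) :
    0 < (Aseq (ZMod p) p i 1).degree := by
  rw [← natDegree_pos_iff_degree_pos]
  by_contra h0
  obtain ⟨i, rfl⟩ := Nat.exists_eq_add_of_le' hi
  have h := congrArg natDegree (X_pow_eq (p := p) i hi2)
  rw [natDegree_X_pow] at h
  have h1 : (Aseq (ZMod p) p (i + 1) 1 * Pk (i + 1)).natDegree ≤ 2 * (i + 1) := by
    refine natDegree_mul_le.trans ?_
    rw [Pk_natDegree]; omega
  have h2 : (C (-(2 * ((i : ZMod p) + 1) * theta (ZMod p) (i + 1))) * Qk (i + 1)).natDegree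
      ≤ 2 * (i + 1) := (natDegree_C_mul_le _ _).trans ((Qk_natDegree i).trans (by omega))
  have := natDegree_add_le_of_degree_le h1 h2
  omega

lemma blockList_degree (k i : ℕ) (hk : 1 ≤ k) (hk2 : 2 * k < p) (hi : 1 ≤ i) (hi2 : 2 * i < p) :
    ∀ a ∈ blockList (p := p) k i, 0 < a.degree := by
  have hA : ∀ m, 1 ≤ m → m ≤ 2 * k →
      0 < (C (vseq (ZMod p) k m) * Aseq (ZMod p) p i 1).degree := by
    intro m h1 h2
    rw [degree_C_mul (vseq_ne_zero k hk2 m h1 h2)]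
    exact Aseq_degree_pos i hi hi2
  intro a ha
  simp only [blockList, block, twistList, List.mem_append, List.mem_flatMap, List.mem_range,
    List.mem_cons, List.mem_map, List.not_mem_nil, or_false] at ha
  rcases ha with ⟨j, hj, rfl | ⟨m, hm, rfl⟩⟩ | rfl
  · exact hA _ (by omega) (by omega)
  · have hd : 2 * (i : ZMod p) * theta (ZMod p) i * fseq p k (j + 1) ≠ 0 :=
      mul_ne_zero (const_ne_zero i hi hi2) (fseq_ne_zero k (j + 1) hk2 (by omega) (by omega))
    rw [degree_neg, degree_C_mul_X
      (mul_ne_zero (zpow_ne_zero _ hd) (vseq_ne_zero i hi2 (m + 1) (by omega) (by omega)))]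
    exact zero_lt_one
  · exact hA _ (by omega) (by omega)

end Prime

/-- **Proposition 2.** Let `p` be an odd prime, `1 ≤ k < p/2`,
`1 ≤ i < p/2`, and `δ_j = 2iθ_i[v_{j,k}, …, v_{1,k}]` for `1 ≤ j ≤ 2k−1`. Then
`P_{kp−i}/Q_k^p` has the finite continued fraction expansion `[b₁, …, b_n]` made of `2k`
blocks, the `j`-th (`j ≤ 2k−1`) being `v_{j,k}A_{1,i}` followed by
`−δ_j^{(−1)^m} v_{m,i} T` for `m = 1, …, 2i`, and the last being `v_{2k,k}A_{1,i}`;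
moreover `[b₁, …, b_n] = −4k²θ_k²[b_n, …, b₁]`. -/
theorem stmt18 (p : ℕ) [Fact p.Prime] (hodd : Odd p) (k : ℕ) (hk : 1 ≤ k)
    (hk2 : 2 * k < p) (i : ℕ) (hi : 1 ≤ i) (hi2 : 2 * i < p) :
    let δ : ℕ → ZMod p := fun j =>
      2 * i * theta (ZMod p) i * fcf ((List.range j).map fun m => vseq (ZMod p) k (j - m))
    let A1 : RatFunc (ZMod p) :=
      algebraMap (Polynomial (ZMod p)) (RatFunc (ZMod p)) (Aseq (ZMod p) p i 1)
    let blk : List (RatFunc (ZMod p)) :=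
      ((List.range (2 * k - 1)).flatMap fun j' =>
        (RatFunc.C (vseq (ZMod p) k (j' + 1)) * A1) ::
          (List.range (2 * i)).map fun m' =>
            -(RatFunc.C (δ (j' + 1) ^ ((-1 : ℤ) ^ (m' + 1)) * vseq (ZMod p) i (m' + 1)) *
              RatFunc.X)) ++
      [RatFunc.C (vseq (ZMod p) k (2 * k)) * A1]
    (∀ j, 1 ≤ j → j ≤ 2 * k - 1 → δ j ≠ 0) ∧
    algebraMap (Polynomial (ZMod p)) (RatFunc (ZMod p)) (Pk (k * p - i))
        / algebraMap (Polynomial (ZMod p)) (RatFunc (ZMod p)) (Qk k) ^ p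
      = fcf blk ∧
    fcf blk = RatFunc.C (-4 * (k : ZMod p) ^ 2 * theta (ZMod p) k ^ 2) * fcf blk.reverse := by
  intro δ A1 blk
  have hblk : blk = (blockList (p := p) k i).map
      (algebraMap (Polynomial (ZMod p)) (RatFunc (ZMod p))) := by
    simp only [blk, blockList, block, twistList, List.map_append, List.map_flatMap, List.map_cons,
      List.map_map, List.map_nil, map_mul, RatFunc.algebraMap_C, A1]
    congr 2
    funext j
    congr 2
    funext m
    simp [δ, fseq, RatFunc.algebraMap_C, RatFunc.algebraMap_X]
  have hne : blockList (p := p) k i ≠ [] := by simp [blockList]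
  have hdeg := blockList_degree (p := p) k i hk hk2 hi hi2
  have hval := (fcf_eq_div _ hdeg).2 hne
  have hrev := (fcf_eq_div (blockList (p := p) k i).reverse
    (fun a ha => hdeg a (List.mem_reverse.mp ha))).2 (by simpa using hne)
  rw [List.map_reverse, cfProd_reverse, Matrix.transpose_apply, Matrix.transpose_apply] at hrev
  have hprod := blockList_prod (p := p) k i hk hk2 hi hi2
  obtain ⟨V00, V01, V10, -⟩ := vProd (p := p) k hk2 hk
  have hPi : (Pk i : (ZMod p)[X]) ≠ 0 := (Pk_monic i).ne_zero
  have hPk : (Pk k : (ZMod p)[X]) ^ p = Pk (k * p - i) * Pk i := by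
    have : i ≤ k * p := by nlinarith
    unfold Pk
    rw [← pow_add, ← pow_mul, Nat.sub_add_cancel this]
  set B := cfProd (blockList (p := p) k i)
  set V := cfProd (linList (vseq (ZMod p) k) (2 * k))
  have hpo : (-1 : (ZMod p)[X]) ^ p = -1 := hodd.neg_one_pow
  have hkp : ((-1 : (ZMod p)[X]) ^ k) ^ p = (-1) ^ k := by rw [← pow_mul, mul_comm, pow_mul, hpo]
  obtain ⟨h00, h10, h01⟩ := entries_of_diag _ _ _ _ hprod
  have hN : ∀ a b, (frobenius (ZMod p)[X] p).mapMatrix V a b = V a b ^ p := fun a b => rfl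
  rw [hN, V00, mul_pow, hkp, hPk] at h00
  rw [hN, V10, mul_pow, hkp] at h10
  rw [hN, V01, mul_pow, mul_pow, hodd.neg_pow, ← C_pow, ZMod.pow_card, hkp] at h01
  -- the overall sign
  obtain ⟨e, he⟩ : ∃ e : (ZMod p)[X], e = ((-1) ^ i) ^ (2 * k - 1) * (-1) ^ k := ⟨_, rfl⟩
  have he0 : e ≠ 0 := by simp [he]
  have b00 : B 0 0 = e * Pk (k * p - i) := by
    apply mul_right_cancel₀ hPi
    rw [h00, he]; ring
  have b10 : B 1 0 = e * Qk k ^ p := by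
    apply mul_right_cancel₀ hPi
    rw [h10, he]; ring
  have b01 : B 0 1 = C (-4 * (k : ZMod p) ^ 2 * theta (ZMod p) k ^ 2) * (e * Qk k ^ p) := by
    rw [h01, he, show -4 * (k : ZMod p) ^ 2 * theta (ZMod p) k ^ 2 =
      -(2 * (k : ZMod p) * theta (ZMod p) k) ^ 2 by ring, C_neg]
    ring
  have hs : (-4 * (k : ZMod p) ^ 2 * theta (ZMod p) k ^ 2) ≠ 0 := by
    have := const_ne_zero (p := p) k hk hk2
    have h2 : (-4 * (k : ZMod p) ^ 2 * theta (ZMod p) k ^ 2) =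
      -(2 * (k : ZMod p) * theta (ZMod p) k) ^ 2 := by ring
    rw [h2]
    exact neg_ne_zero.mpr (pow_ne_zero _ this)
  refine ⟨fun j h1 h2 => ?_, ?_, ?_⟩
  · exact mul_ne_zero (const_ne_zero i hi hi2) (fseq_ne_zero k j hk2 h1 (by omega))
  · have he1 : algebraMap (ZMod p)[X] (RatFunc (ZMod p)) e ≠ 0 := by simpa using he0
    rw [hblk, hval, b00, b10, map_mul _ e, map_mul _ e, map_pow, mul_div_mul_left _ _ he1]
  · have hs' : (RatFunc.C (-4 * (k : ZMod p) ^ 2 * theta (ZMod p) k ^ 2)) ≠ 0 := by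
      rw [Ne, map_eq_zero]; exact hs
    rw [hblk, hrev, hval, b10, b01, map_mul _ (C _), RatFunc.algebraMap_C,
      ← mul_div_assoc, mul_div_mul_left _ _ hs']
end
end

section
/- Let q be a power of an odd prime and let P(X) = Σ_{0≤i≤n} a_i X^i ∈ F_q[T][X] be a polynomial of degree n ≥ 1 in X such that |a_i| < |a_{n−1}| for all 0 ≤ i ≤ n with i ≠ n−1 (condition (*)). Then P has a unique root u in F(q)⁺ = { α ∈ F(q) : |α| ≥ |T| }, and its integral (polynomial) part satisfies [u] = −[a_{n−1}/a_n]. Moreover, if u ≠ [u] and u = [u] + 1/v, then v is the unique root in F(q)⁺ of a polynomial Q(X) = Σ_{0≤i≤n} b_i X^i of degree n whose coefficients again satisfy condition (*). -/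
/-!
The proof works with the valuation `lval` on `F((1/T))`, for which `|P| < |Q|` on polynomials is
the comparison of degrees. Let `n = m + 1` and `d = a_m / a_{m+1}`, so `|d| > 1` by condition `(*)`.

* *Location.* If `u` is a root with `|u| > 1`, dividing the equation by `a_{m+1} u ^ m` gives
  `|u + d| * |u| < |d|`, whence `|u| = |d|` and `|u + d| < 1` (`val_root_add_lt_one`). Since a
  polynomial of absolute value `< 1` vanishes, this yields `[u] = -[a_m / a_{m+1}]`.
* *Existence and uniqueness.* The substitution `X = d Z` turns `P`, up to a constant, into a monic
  polynomial `f` over `F⟦1/T⟧` which reduces to `Z ^ (m + 1) + Z ^ m` (`exists_scaled`). The residue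
  `-1` is a simple root of the reduction, so Hensel's lemma provides exactly one root of `f` above
  it, and by the location step these are the only roots of `P` to be considered
  (`DominatedBy.existsUnique_root`).
* *The next polynomial.* With `A = [u]`, take `Q(Y) = Y ^ n P(A + 1 / Y)`. Its coefficients are the
  Taylor coefficients `c_j` of `P` at `A`, with `c_j` in index `n - j`. After rescaling by `d`,
  `c_1` becomes a unit and all others are integral, so `|c_j| < |c_1|` for `j ≥ 2`; expanding
  `P(u) = 0` around `A` and using `|u - A| < 1` gives `|c_0| < |c_1|`. Finally `c_0 = P(A) ≠ 0`
  because otherwise `A` would be a second large root.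
-/

noncomputable section
open Polynomial

/-! ### The valuation on Laurent series -/

/-- The absolute value of `F(q)`, normalised to take values in `ℤᵐ⁰` with `|T| = exp 1`. -/
abbrev lval (F : Type) [Field F] :
    Valuation (LaurentSeries F) (WithZero (Multiplicative ℤ)) := Valued.v

section Valuation

variable {F : Type} [Field F]

lemma lval_lt_one_iff (α : LaurentSeries F) :
    lval F α < 1 ↔ ∀ k : ℤ, k < 1 → α.coeff k = 0 := by
  rw [← LaurentSeries.valuation_le_iff_coeff_lt_eq_zero,
    ← WithZero.lt_mul_exp_iff_le WithZero.exp_ne_zero, ← WithZero.exp_add]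
  simp

lemma lval_eq_exp {α : LaurentSeries F} (hα : α ≠ 0) :
    lval F α = WithZero.exp (adeg α) := by
  apply le_antisymm
  · exact (LaurentSeries.valuation_le_iff_coeff_lt_eq_zero F).2
      fun k hk => HahnSeries.coeff_eq_zero_of_lt_order hk
  · by_contra! hlt
    have h2 : lval F α ≤ WithZero.exp (-(α.order + 1)) := by
      rw [← WithZero.lt_mul_exp_iff_le WithZero.exp_ne_zero, ← WithZero.exp_add]
      simpa [adeg] using hlt
    exact hα (HahnSeries.coeff_order_eq_zero.1
      ((LaurentSeries.valuation_le_iff_coeff_lt_eq_zero F).1 h2 _ (by omega)))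

lemma one_le_adeg_iff (α : LaurentSeries F) : 1 ≤ adeg α ↔ 1 < lval F α := by
  by_cases h : α = 0
  · simp [h, adeg]
  · rw [lval_eq_exp h, ← WithZero.exp_zero, WithZero.exp_lt_exp]
    omega

lemma pEvalHom_monomial (j : ℕ) (c : F) :
    pEvalHom F (C c * X ^ j) = HahnSeries.single (-(j : ℤ)) c := by
  have h : ∀ j : ℕ, (Tval F) ^ j = HahnSeries.single (-(j : ℤ)) (1 : F) := by
    intro j
    rw [Tval, inv_pow, HahnSeries.single_pow, HahnSeries.inv_single]
    simp
  simp only [pEvalHom, map_mul, map_pow, coe_eval₂RingHom, eval₂_C, eval₂_X, h]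
  simp

lemma coeff_pEvalHom_range (N : ℕ) (c : ℕ → F) (k : ℤ) :
    (pEvalHom F (∑ j ∈ Finset.range N, C (c j) * X ^ j)).coeff k =
      if k ≤ 0 ∧ k.natAbs < N then c k.natAbs else 0 := by
  rw [map_sum, HahnSeries.coeff_sum]
  simp only [pEvalHom_monomial, HahnSeries.coeff_single]
  split_ifs with h
  · rw [Finset.sum_eq_single k.natAbs]
    · rw [if_pos (by omega)]
    · intro b _ hb
      rw [if_neg (by omega)]
    · intro hk
      simp at hk
      omega
  · refine Finset.sum_eq_zero fun j hj => if_neg ?_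
    rw [Finset.mem_range] at hj
    omega

lemma lval_sub_intPart (α : LaurentSeries F) :
    lval F (α - pEvalHom F (intPart α)) < 1 := by
  rw [lval_lt_one_iff]
  intro k hk
  rw [HahnSeries.coeff_sub, intPart, coeff_pEvalHom_range]
  split_ifs with h
  · rw [show -((k.natAbs : ℕ) : ℤ) = k by omega, sub_self]
  · rw [sub_zero]
    exact HahnSeries.coeff_eq_zero_of_lt_order (by omega)

lemma coeff_pEvalHom (f : F[X]) (k : ℤ) :
    (pEvalHom F f).coeff k = if k ≤ 0 then f.coeff k.natAbs else 0 := by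
  conv_lhs => rw [f.as_sum_range_C_mul_X_pow]
  rw [coeff_pEvalHom_range]
  by_cases h : k ≤ 0
  · by_cases h2 : k.natAbs < f.natDegree + 1
    · simp [h, h2]
    · simp only [h, h2, and_false, if_false, if_true]
      exact (coeff_eq_zero_of_natDegree_lt (by omega)).symm
  · simp [h]

lemma lval_pEvalHom {f : F[X]} (hf : f ≠ 0) :
    lval F (pEvalHom F f) = WithZero.exp (f.natDegree : ℤ) := by
  have h1 : (pEvalHom F f).coeff (-(f.natDegree : ℤ)) ≠ 0 := by
    rw [coeff_pEvalHom]
    simpa using hf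
  have h2 : pEvalHom F f ≠ 0 := fun h => h1 (by rw [h]; rfl)
  rw [lval_eq_exp h2, adeg]
  congr 1
  have h3 := HahnSeries.order_le_of_coeff_ne_zero h1
  have h4 : (pEvalHom F f).coeff (pEvalHom F f).order ≠ 0 :=
    fun h => h2 (HahnSeries.coeff_order_eq_zero.1 h)
  rw [coeff_pEvalHom] at h4
  split_ifs at h4 with h
  · have := le_natDegree_of_ne_zero h4
    omega
  · exact absurd rfl h4

lemma pEvalHom_ne_zero {f : F[X]} (hf : f ≠ 0) : pEvalHom F f ≠ 0 := by
  rw [← (lval F).ne_zero_iff, lval_pEvalHom hf]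
  exact WithZero.exp_ne_zero

lemma lval_pEvalHom_lt_iff (f g : F[X]) :
    lval F (pEvalHom F f) < lval F (pEvalHom F g) ↔ f.degree < g.degree := by
  by_cases hg : g = 0
  · simp [hg]
  by_cases hf : f = 0
  · rw [hf, map_zero, map_zero, degree_zero, lval_pEvalHom hg]
    simp [bot_lt_iff_ne_bot, hg, WithZero.exp_pos]
  · rw [lval_pEvalHom hf, lval_pEvalHom hg, WithZero.exp_lt_exp, degree_eq_natDegree hf,
      degree_eq_natDegree hg]
    norm_cast

lemma eq_zero_of_lval_pEvalHom_lt_one {f : F[X]} (h : lval F (pEvalHom F f) < 1) : f = 0 := by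
  by_contra hf
  rw [lval_pEvalHom hf, ← WithZero.exp_zero, WithZero.exp_lt_exp] at h
  omega

lemma lval_div_sub_lt_one (f : F[X]) {g : F[X]} (hg : g ≠ 0) :
    lval F (pEvalHom F f / pEvalHom F g - pEvalHom F (f / g)) < 1 := by
  have hg' := pEvalHom_ne_zero hg
  have h : pEvalHom F f / pEvalHom F g - pEvalHom F (f / g) =
      pEvalHom F (f % g) / pEvalHom F g := by
    rw [div_sub' hg']
    congr 1
    rw [sub_eq_iff_eq_add, ← map_mul, ← map_add, EuclideanDomain.mod_add_div]
  rw [h, map_div₀]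
  have h0 : 0 < lval F (pEvalHom F g) := (lval F).pos_iff.2 hg'
  rw [div_lt_one₀ h0, lval_pEvalHom_lt_iff]
  exact EuclideanDomain.mod_lt f hg

lemma lval_ofPowerSeries_le_one (s : PowerSeries F) :
    lval F (HahnSeries.ofPowerSeries ℤ F s) ≤ 1 :=
  (LaurentSeries.val_le_one_iff_eq_coe F _).2 ⟨s, rfl⟩

lemma lval_ofPowerSeries_lt_one_iff (s : PowerSeries F) :
    lval F (HahnSeries.ofPowerSeries ℤ F s) < 1 ↔ PowerSeries.constantCoeff s = 0 := by
  rw [lval_lt_one_iff, ← PowerSeries.coeff_zero_eq_constantCoeff_apply,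
    ← LaurentSeries.coeff_coe_powerSeries]
  refine ⟨fun h => h _ (by simp), fun h k hk => ?_⟩
  rcases lt_or_eq_of_le (show k ≤ 0 by omega) with hk | rfl
  · rw [PowerSeries.coeff_coe, if_pos hk]
  · simpa using h

end Valuation

/-! ### Location of the large root -/

/-- A root of absolute value `> 1` of a polynomial of degree `m + 1` whose coefficient of index `m`
dominates is at distance `< 1` from `-a_m / a_{m+1}`: the equation forces
`|u + a_m / a_{m+1}| * |u| < |a_m / a_{m+1}|`, hence `|u| = |a_m / a_{m+1}|`. -/
lemma val_root_add_lt_one {K Γ : Type*} [Field K] [LinearOrderedCommGroupWithZero Γ]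
    (w : Valuation K Γ) (m : ℕ) (a : ℕ → K) (u : K) (hlead : a (m + 1) ≠ 0)
    (hlow : ∀ i < m, w (a i) < w (a m)) (htop : w (a (m + 1)) < w (a m)) (hu : 1 < w u)
    (hroot : ∑ i ∈ Finset.range (m + 2), a i * u ^ i = 0) :
    w (u + a m / a (m + 1)) < 1 := by
  have hu0 : w u ≠ 0 := (zero_lt_one.trans hu).ne'
  have htop0 : 0 < w (a (m + 1)) := w.pos_iff.2 hlead
  have hm0 : w (a m) ≠ 0 := (htop0.trans htop).ne'
  set d := a m / a (m + 1) with hd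
  have hd1 : 1 < w d := by
    rw [hd, map_div₀, one_lt_div₀ htop0]
    exact htop
  have hS : w (u * ∑ i ∈ Finset.range m, a i * u ^ i) < w (a m) * w u ^ m := by
    rw [Finset.mul_sum]
    refine w.map_sum_lt (mul_ne_zero hm0 (pow_ne_zero _ hu0)) fun i hi => ?_
    rw [Finset.mem_range] at hi
    rw [show u * (a i * u ^ i) = a i * u ^ (i + 1) by ring, map_mul, map_pow]
    calc w (a i) * w u ^ (i + 1) ≤ w (a i) * w u ^ m :=
          mul_le_mul_right (pow_le_pow_right₀ hu.le hi) _
      _ < w (a m) * w u ^ m :=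
          mul_lt_mul_of_pos_right (hlow i hi) (pow_pos (zero_lt_iff.2 hu0) _)
  have hS' : u * ∑ i ∈ Finset.range m, a i * u ^ i =
      -(a (m + 1) * u ^ m * ((u + d) * u)) := by
    rw [Finset.sum_range_succ, Finset.sum_range_succ] at hroot
    have : a m = d * a (m + 1) := by rw [hd, div_mul_cancel₀ _ hlead]
    rw [this] at hroot
    linear_combination u * hroot
  have key : w (u + d) * w u < w d := by
    rw [hS', Valuation.map_neg, map_mul, map_mul, map_pow,
      show w (a m) = w (a (m + 1)) * w d by rw [hd, map_div₀, mul_div_cancel₀ _ htop0.ne'],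
      mul_right_comm (w (a (m + 1))) (w d), map_mul] at hS
    exact lt_of_mul_lt_mul_left' hS
  have heq : w u = w d := by
    rcases lt_trichotomy (w u) (w d) with h | h | h
    · rw [w.map_add_eq_of_lt_right h] at key
      exact absurd key (not_lt.2 (le_mul_of_one_le_right' hu.le))
    · exact h
    · rw [w.map_add_eq_of_lt_left h] at key
      exact absurd (key.trans h) (not_lt.2 (le_mul_of_one_le_right' hu.le))
  rw [heq] at key
  by_contra! hge
  exact absurd key (not_lt.2 (le_mul_of_one_le_left' hge))

/-! ### The rescaled integral polynomial -/

section Scaled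

variable {F : Type} [Field F]

/-- Condition `(*)` for a polynomial of degree `m + 1` over the field of Laurent series: the
coefficient of index `m` is strictly larger than all the others. -/
structure DominatedBy (m : ℕ) (p : (LaurentSeries F)[X]) : Prop where
  natDegree_eq : p.natDegree = m + 1
  low : ∀ i < m, lval F (p.coeff i) < lval F (p.coeff m)
  top : lval F (p.coeff (m + 1)) < lval F (p.coeff m)

lemma DominatedBy.lead_ne_zero {m : ℕ} {p : (LaurentSeries F)[X]} (hp : DominatedBy m p) :
    p.coeff (m + 1) ≠ 0 := by
  rw [← hp.natDegree_eq, coeff_natDegree, leadingCoeff_ne_zero]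
  rintro rfl
  simpa using hp.natDegree_eq

/-- The approximate opposite `a_m / a_{m+1}` of the large root. -/
def ratio (m : ℕ) (p : (LaurentSeries F)[X]) : LaurentSeries F := p.coeff m / p.coeff (m + 1)

lemma DominatedBy.one_lt_ratio {m : ℕ} {p : (LaurentSeries F)[X]} (hp : DominatedBy m p) :
    1 < lval F (ratio m p) := by
  rw [ratio, map_div₀, one_lt_div₀ ((lval F).pos_iff.2 hp.lead_ne_zero)]
  exact hp.top

lemma DominatedBy.ratio_ne_zero {m : ℕ} {p : (LaurentSeries F)[X]} (hp : DominatedBy m p) :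
    ratio m p ≠ 0 :=
  (lval F).pos_iff.1 (zero_lt_one.trans hp.one_lt_ratio)

lemma eval_neg_one_derivative (m : ℕ) :
    (derivative (X ^ (m + 1) + X ^ m : F[X])).eval (-1) = (-1) ^ m := by
  rcases m with _ | m
  · simp
  · simp [pow_succ]
    ring

/-- The derivative of a polynomial reducing to `X ^ (m + 1) + X ^ m` is a unit at every lift of
`-1`, i.e. `-1` is a simple root of the reduction. -/
lemma constantCoeff_eval_derivative {m : ℕ} {f : (PowerSeries F)[X]}
    (hf : f.map PowerSeries.constantCoeff = X ^ (m + 1) + X ^ m) {z : PowerSeries F}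
    (hz : PowerSeries.constantCoeff z = -1) :
    PowerSeries.constantCoeff (f.derivative.eval z) = (-1) ^ m := by
  rw [← eval_neg_one_derivative, ← hf, derivative_map, ← hz, eval_map_apply]

lemma exists_lift_root {m : ℕ} {f : (PowerSeries F)[X]} (hmonic : f.Monic)
    (hf : f.map PowerSeries.constantCoeff = X ^ (m + 1) + X ^ m) :
    ∃ z : PowerSeries F, PowerSeries.constantCoeff z = -1 ∧ f.eval z = 0 := by
  have hmem : ∀ s : PowerSeries F, s ∈ Ideal.span {(PowerSeries.X : PowerSeries F)} ↔
      PowerSeries.constantCoeff s = 0 := fun s => by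
    rw [Ideal.mem_span_singleton, PowerSeries.X_dvd_iff]
  have h1 : PowerSeries.constantCoeff (-1 : PowerSeries F) = -1 := by simp
  obtain ⟨z, hz, hz'⟩ := HenselianRing.is_henselian
    (I := Ideal.span {(PowerSeries.X : PowerSeries F)}) f hmonic (-1)
    (by
      rw [hmem, ← eval_map_apply, hf, h1]
      simp [pow_succ])
    (by
      refine IsUnit.map _ (PowerSeries.isUnit_iff_constantCoeff.2 ?_)
      rw [constantCoeff_eval_derivative hf h1]
      exact (isUnit_one.neg).pow m)
  rw [hmem, map_sub, h1, sub_eq_zero] at hz'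
  exact ⟨z, hz', hz⟩

lemma lift_root_unique {m : ℕ} {f : (PowerSeries F)[X]}
    (hf : f.map PowerSeries.constantCoeff = X ^ (m + 1) + X ^ m) {y z : PowerSeries F}
    (hy : PowerSeries.constantCoeff y = -1) (hz : PowerSeries.constantCoeff z = -1)
    (hfy : f.eval y = 0) (hfz : f.eval z = 0) : y = z := by
  obtain ⟨k, hk⟩ := f.binomExpansion y (z - y)
  rw [add_sub_cancel, hfy, hfz] at hk
  have h : (z - y) * (f.derivative.eval y + k * (z - y)) = 0 := by linear_combination -hk
  rcases mul_eq_zero.1 h with h | h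
  · exact (sub_eq_zero.1 h).symm
  · have := congrArg PowerSeries.constantCoeff h
    rw [map_add, map_mul, map_sub, hy, hz, constantCoeff_eval_derivative hf hy] at this
    simp at this

/-- Substituting `X = d * Z` with `d = a_m / a_{m+1}` and dividing by `a_{m+1} * d ^ (m + 1)` turns
a polynomial whose coefficient of index `m` dominates into a monic polynomial over `F⟦1/T⟧` that
reduces to `Z ^ (m + 1) + Z ^ m`. -/
lemma exists_scaled {m : ℕ} {p : (LaurentSeries F)[X]} (hp : DominatedBy m p) :
    ∃ f : (PowerSeries F)[X], f.Monic ∧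
      f.map PowerSeries.constantCoeff = X ^ (m + 1) + X ^ m ∧
      p.comp (C (ratio m p) * X) =
        C (p.coeff (m + 1) * (ratio m p) ^ (m + 1)) *
          f.map (HahnSeries.ofPowerSeries ℤ F) := by
  have hlead := hp.lead_ne_zero
  have htop0 : 0 < lval F (p.coeff (m + 1)) := (lval F).pos_iff.2 hlead
  have hm0 : p.coeff m ≠ 0 := (lval F).pos_iff.1 (htop0.trans hp.top)
  have hd0 := hp.ratio_ne_zero
  have hd1 := hp.one_lt_ratio
  set d := ratio m p with hd
  have hlow' : ∀ i < m, lval F (p.coeff i * d ^ i / (p.coeff (m + 1) * d ^ (m + 1))) < 1 := by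
    intro i hi
    have hden : p.coeff (m + 1) * d ^ (m + 1) = p.coeff m * d ^ m := by
      rw [pow_succ', ← mul_assoc]
      congr 1
      rw [hd, ratio, mul_div_cancel₀ _ hlead]
    rw [hden, map_div₀, div_lt_one₀ ((lval F).pos_iff.2 (mul_ne_zero hm0 (pow_ne_zero _ hd0))),
      map_mul, map_mul, map_pow, map_pow]
    calc lval F (p.coeff i) * lval F d ^ i ≤ lval F (p.coeff i) * lval F d ^ m :=
          mul_le_mul_right (pow_le_pow_right₀ hd1.le hi.le) _
      _ < _ := mul_lt_mul_of_pos_right (hp.low i hi)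
          (pow_pos (zero_lt_one.trans hd1) _)
  have hex : ∀ i, ∃ s : PowerSeries F, i < m → HahnSeries.ofPowerSeries ℤ F s =
      p.coeff i * d ^ i / (p.coeff (m + 1) * d ^ (m + 1)) := by
    intro i
    by_cases hi : i < m
    · obtain ⟨s, hs⟩ := (LaurentSeries.val_le_one_iff_eq_coe F _).1 (hlow' i hi).le
      exact ⟨s, fun _ => hs⟩
    · exact ⟨0, fun h => absurd h hi⟩
  choose c hc using hex
  have hc0 : ∀ i < m, PowerSeries.constantCoeff (c i) = 0 := fun i hi => by
    rw [← lval_ofPowerSeries_lt_one_iff, hc i hi]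
    exact hlow' i hi
  refine ⟨X ^ (m + 1) + (X ^ m + ∑ i ∈ Finset.range m, C (c i) * X ^ i), ?_, ?_, ?_⟩
  · refine monic_X_pow_add (lt_of_le_of_lt (degree_add_le _ _) (max_lt ?_ ?_))
    · rw [degree_X_pow]
      exact_mod_cast m.lt_succ_self
    · refine lt_of_le_of_lt (degree_sum_le _ _) ((Finset.sup_lt_iff (WithBot.bot_lt_coe _)).2 ?_)
      intro i hi
      refine lt_of_le_of_lt (degree_C_mul_X_pow_le _ _) ?_
      rw [Finset.mem_range] at hi
      exact_mod_cast hi.trans m.lt_succ_self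
  · simp only [Polynomial.map_add, Polynomial.map_sum, Polynomial.map_mul, Polynomial.map_pow,
      map_X, map_C]
    rw [Finset.sum_eq_zero, add_zero]
    intro i hi
    rw [hc0 i (Finset.mem_range.1 hi)]
    simp
  · conv_lhs => rw [p.as_sum_range_C_mul_X_pow, hp.natDegree_eq, Finset.sum_range_succ, Finset.sum_range_succ]
    simp only [Polynomial.map_add, Polynomial.map_sum, Polynomial.map_mul, Polynomial.map_pow,
      map_X, map_C, add_comp, mul_comp, pow_comp, C_comp, X_comp, sum_comp, mul_add,
      Finset.mul_sum]
    have hsum : ∀ i ∈ Finset.range m, C (p.coeff i) * (C d * X) ^ i =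
        C (p.coeff (m + 1) * d ^ (m + 1)) *
          (C (HahnSeries.ofPowerSeries ℤ F (c i)) * X ^ i) := by
      intro i hi
      rw [hc i (Finset.mem_range.1 hi), ← mul_assoc, ← C_mul, mul_pow, ← C_pow, ← mul_assoc,
        ← C_mul, mul_div_cancel₀ _ (mul_ne_zero hlead (pow_ne_zero _ hd0))]
    have hm : p.coeff m = p.coeff (m + 1) * d := by rw [hd, ratio, mul_div_cancel₀ _ hlead]
    rw [Finset.sum_congr rfl hsum, hm]
    simp only [C_mul, C_pow]
    ring

end Scaled

/-! ### Existence and uniqueness of the large root -/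

section Roots

variable {F : Type} [Field F] {m : ℕ} {p : (LaurentSeries F)[X]}

lemma DominatedBy.lval_root_add_lt_one (hp : DominatedBy m p) {u : LaurentSeries F}
    (hu : 1 < lval F u) (hroot : p.eval u = 0) : lval F (u + ratio m p) < 1 := by
  refine val_root_add_lt_one (lval F) m p.coeff u hp.lead_ne_zero hp.low hp.top hu ?_
  rw [← hroot, eval_eq_sum_range, hp.natDegree_eq]

lemma DominatedBy.lval_eq_of_add_lt_one (hp : DominatedBy m p) {x : LaurentSeries F}
    (hx : lval F (x + ratio m p) < 1) : lval F x = lval F (ratio m p) := by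
  have h := (lval F).map_sub_eq_of_lt_right (hx.trans hp.one_lt_ratio)
  rwa [add_sub_cancel_right] at h

lemma DominatedBy.exists_lift (hp : DominatedBy m p) {x : LaurentSeries F}
    (hx : lval F (x + ratio m p) < 1) :
    ∃ z : PowerSeries F, PowerSeries.constantCoeff z = -1 ∧
      x = ratio m p * HahnSeries.ofPowerSeries ℤ F z := by
  have hd0 := hp.ratio_ne_zero
  have h1 : lval F ((x + ratio m p) / ratio m p) < 1 := by
    rw [map_div₀, div_lt_one₀ ((lval F).pos_iff.2 hd0)]
    exact hx.trans hp.one_lt_ratio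
  obtain ⟨s, hs⟩ := (LaurentSeries.val_le_one_iff_eq_coe F _).1 h1.le
  rw [← hs, lval_ofPowerSeries_lt_one_iff] at h1
  refine ⟨s - 1, by simp [h1], ?_⟩
  rw [map_sub, hs, map_one, mul_sub, mul_div_cancel₀ _ hd0]
  ring

lemma eval_scaled {f : (PowerSeries F)[X]} {b d : LaurentSeries F}
    (hf : p.comp (C d * X) = C b * f.map (HahnSeries.ofPowerSeries ℤ F)) (z : PowerSeries F) :
    p.eval (d * HahnSeries.ofPowerSeries ℤ F z) =
      b * HahnSeries.ofPowerSeries ℤ F (f.eval z) := by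
  have := congrArg (eval (HahnSeries.ofPowerSeries ℤ F z)) hf
  simpa [eval_comp, eval_map_apply] using this

theorem DominatedBy.existsUnique_root (hp : DominatedBy m p) :
    ∃! u : LaurentSeries F, 1 < lval F u ∧ p.eval u = 0 := by
  obtain ⟨f, hmonic, hred, hf⟩ := exists_scaled hp
  have hb : p.coeff (m + 1) * ratio m p ^ (m + 1) ≠ 0 :=
    mul_ne_zero hp.lead_ne_zero (pow_ne_zero _ hp.ratio_ne_zero)
  obtain ⟨z, hz, hfz⟩ := exists_lift_root hmonic hred
  refine ⟨ratio m p * HahnSeries.ofPowerSeries ℤ F z, ⟨?_, ?_⟩, ?_⟩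
  · have h1 : lval F (HahnSeries.ofPowerSeries ℤ F z) = 1 := by
      refine le_antisymm (lval_ofPowerSeries_le_one z) (not_lt.1 fun h => ?_)
      rw [lval_ofPowerSeries_lt_one_iff, hz] at h
      simp at h
    rw [map_mul, h1, mul_one]
    exact hp.one_lt_ratio
  · rw [eval_scaled hf, hfz, map_zero, mul_zero]
  · rintro u ⟨hu, hroot⟩
    obtain ⟨y, hy, rfl⟩ := hp.exists_lift (hp.lval_root_add_lt_one hu hroot)
    rw [eval_scaled hf, mul_eq_zero, or_iff_right hb,
      map_eq_zero_iff _ HahnSeries.ofPowerSeries_injective] at hroot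
    rw [lift_root_unique hred hy hz hroot hfz]

/-! ### Taylor coefficients near the large root -/

/-- Near the large root the linear Taylor coefficient strictly dominates all higher ones, since
after rescaling by `d` it is a unit while the others are integral, and `|d| > 1`. -/
lemma DominatedBy.lval_taylor_coeff_lt (hp : DominatedBy m p) {x : LaurentSeries F}
    (hx : lval F (x + ratio m p) < 1) {j : ℕ} (hj : 2 ≤ j) :
    lval F ((taylor x p).coeff j) < lval F ((taylor x p).coeff 1) := by
  obtain ⟨f, hmonic, hred, hf⟩ := exists_scaled hp
  obtain ⟨z, hz, rfl⟩ := hp.exists_lift hx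
  have hd0 := hp.ratio_ne_zero
  have hd1 := hp.one_lt_ratio
  set d := ratio m p
  set b := p.coeff (m + 1) * d ^ (m + 1)
  have hb : b ≠ 0 := mul_ne_zero hp.lead_ne_zero (pow_ne_zero _ hd0)
  set x := d * HahnSeries.ofPowerSeries ℤ F z with hxdef
  have hcoeff : ∀ k, (taylor x p).coeff k * d ^ k =
      b * HahnSeries.ofPowerSeries ℤ F ((taylor z f).coeff k) := by
    intro k
    have h : (taylor x p).comp (C d * X) =
        taylor (HahnSeries.ofPowerSeries ℤ F z) (p.comp (C d * X)) := by
      simp only [taylor_apply, comp_assoc]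
      congr 1
      simp [hxdef, mul_add]
    rw [← comp_C_mul_X_coeff, h, hf, taylor_mul, taylor_C, coeff_C_mul, ← map_taylor, coeff_map]
  have h1 : lval F ((taylor x p).coeff 1) * lval F d = lval F b := by
    have hunit : lval F (HahnSeries.ofPowerSeries ℤ F ((taylor z f).coeff 1)) = 1 := by
      refine le_antisymm (lval_ofPowerSeries_le_one _) (not_lt.1 fun h => ?_)
      rw [lval_ofPowerSeries_lt_one_iff, taylor_coeff_one,
        constantCoeff_eval_derivative hred hz] at h
      simp at h
    have := congrArg (lval F) (hcoeff 1)
    rwa [pow_one, map_mul, map_mul, hunit, mul_one] at this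
  have hle : lval F ((taylor x p).coeff j) * lval F d ^ j ≤ lval F b := by
    have := congrArg (lval F) (hcoeff j)
    rw [map_mul, map_mul, map_pow] at this
    rw [this]
    exact mul_le_of_le_one_right' (lval_ofPowerSeries_le_one _)
  have hdpos : 0 < lval F d := zero_lt_one.trans hd1
  by_contra! hge
  have h2 : lval F b < lval F ((taylor x p).coeff j) * lval F d ^ j := by
    rw [← h1]
    have hpos : 0 < lval F ((taylor x p).coeff j) := by
      refine lt_of_lt_of_le ?_ hge
      rw [zero_lt_iff]
      intro h0
      rw [h0, zero_mul] at h1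
      exact hb ((lval F).zero_iff.1 h1.symm)
    calc lval F ((taylor x p).coeff 1) * lval F d
        ≤ lval F ((taylor x p).coeff j) * lval F d := mul_le_mul_left hge _
      _ < lval F ((taylor x p).coeff j) * lval F d ^ j :=
          mul_lt_mul_of_pos_left (lt_self_pow₀ hd1 hj) hpos
  exact absurd hle (not_le.2 h2)

lemma DominatedBy.lval_taylor_coeff_zero_lt (hp : DominatedBy m p) {x u : LaurentSeries F}
    (hx : lval F (x + ratio m p) < 1) (hroot : p.eval u = 0) (hux : lval F (u - x) < 1) :
    lval F ((taylor x p).coeff 0) < lval F ((taylor x p).coeff 1) := by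
  have hpos : 0 < lval F ((taylor x p).coeff 1) :=
    lt_of_le_of_lt zero_le (hp.lval_taylor_coeff_lt hx le_rfl)
  have hsum : (taylor x p).eval (u - x) = 0 := by rw [taylor_eval, sub_add_cancel, hroot]
  rw [eval_eq_sum_range, natDegree_taylor, hp.natDegree_eq, Finset.sum_range_succ', pow_zero,
    mul_one, add_comm, add_eq_zero_iff_eq_neg] at hsum
  rw [hsum, Valuation.map_neg]
  refine (lval F).map_sum_lt hpos.ne' fun k _ => ?_
  have hk : lval F ((taylor x p).coeff (k + 1)) ≤ lval F ((taylor x p).coeff 1) := by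
    rcases k with _ | k
    · exact le_rfl
    · exact (hp.lval_taylor_coeff_lt hx (by omega)).le
  rw [map_mul, map_pow]
  calc _ ≤ lval F ((taylor x p).coeff 1) * lval F (u - x) ^ (k + 1) := mul_le_mul_left hk _
    _ < lval F ((taylor x p).coeff 1) * 1 :=
        mul_lt_mul_of_pos_left (pow_lt_one₀ zero_le hux (by omega)) hpos
    _ = _ := mul_one _

end Roots

/-! ### Transfer to polynomials over `F[T]` -/

lemma dominatedBy_map_iff {F : Type} [Field F] {m : ℕ} {P : F[X][X]} :
    DominatedBy m (P.map (pEvalHom F)) ↔ P.natDegree = m + 1 ∧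
      ∀ i, i ≤ m + 1 → i ≠ m → (P.coeff i).degree < (P.coeff m).degree := by
  have hinj : Function.Injective (pEvalHom F) :=
    (injective_iff_map_eq_zero _).2 fun f hf => by
      by_contra h
      exact pEvalHom_ne_zero h hf
  constructor
  · rintro ⟨hdeg, hlow, htop⟩
    rw [natDegree_map_eq_of_injective hinj] at hdeg
    refine ⟨hdeg, fun i hi hi' => ?_⟩
    rw [← lval_pEvalHom_lt_iff]
    simp only [coeff_map] at hlow htop
    rcases lt_or_gt_of_ne hi' with h | h
    · exact hlow i h
    · obtain rfl : i = m + 1 := by omega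
      exact htop
  · rintro ⟨hdeg, h⟩
    refine ⟨by rwa [natDegree_map_eq_of_injective hinj], fun i hi => ?_, ?_⟩
    · rw [coeff_map, coeff_map, lval_pEvalHom_lt_iff]
      exact h i (by omega) (by omega)
    · rw [coeff_map, coeff_map, lval_pEvalHom_lt_iff]
      exact h _ le_rfl (by omega)

/-- **Mkaouar.** Let `F_q` be a finite field of odd characteristic and
`P(X) = Σ a_i X^i ∈ F_q[T][X]` of degree `n ≥ 1` in `X` with `|a_i| < |a_{n−1}|` for
`i ≤ n`, `i ≠ n−1` (condition (*)). Then `P` has a unique root `u` in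
`F(q)⁺ = {α : |α| ≥ |T|}`, with `[u] = −[a_{n−1}/a_n]`; and if `u ≠ [u]`,
`u = [u] + 1/v`, then `v` is the unique root in `F(q)⁺` of a degree-`n` polynomial `Q`
whose coefficients again satisfy (*). -/
theorem stmt19 (F : Type) [Field F] [Fintype F] (hodd : ringChar F ≠ 2)
    (n : ℕ) (hn : 1 ≤ n) (P : Polynomial (Polynomial F)) (hdeg : P.natDegree = n)
    (hP : P ≠ 0)
    (hstar : ∀ i, i ≤ n → i ≠ n - 1 → (P.coeff i).degree < (P.coeff (n - 1)).degree) :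
    (∃! u : LaurentSeries F, 1 ≤ adeg u ∧ Polynomial.eval₂ (pEvalHom F) u P = 0) ∧
    ∀ u : LaurentSeries F, 1 ≤ adeg u → Polynomial.eval₂ (pEvalHom F) u P = 0 →
      intPart u = -(P.coeff (n - 1) / P.coeff n) ∧
      (u ≠ pEval (intPart u) →
        ∀ v : LaurentSeries F, u = pEval (intPart u) + v⁻¹ →
          ∃ Q : Polynomial (Polynomial F), Q.natDegree = n ∧ Q ≠ 0 ∧
            (∀ i, i ≤ n → i ≠ n - 1 → (Q.coeff i).degree < (Q.coeff (n - 1)).degree) ∧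
            1 ≤ adeg v ∧ Polynomial.eval₂ (pEvalHom F) v Q = 0 ∧
            ∀ w : LaurentSeries F, 1 ≤ adeg w →
              Polynomial.eval₂ (pEvalHom F) w Q = 0 → w = v) := by
  obtain ⟨m, rfl⟩ : ∃ m, n = m + 1 := ⟨n - 1, by omega⟩
  rw [Nat.add_sub_cancel] at *
  have hp : DominatedBy m (P.map (pEvalHom F)) := dominatedBy_map_iff.2 ⟨hdeg, hstar⟩
  have hlead : P.coeff (m + 1) ≠ 0 := fun h => hp.lead_ne_zero (by rw [coeff_map, h, map_zero])
  simp only [one_le_adeg_iff, eval₂_eq_eval_map]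
  refine ⟨hp.existsUnique_root, fun u hu hroot => ?_⟩
  have hud := hp.lval_root_add_lt_one hu hroot
  have hint : lval F (u - pEvalHom F (intPart u)) < 1 := lval_sub_intPart u
  refine ⟨?_, fun hne v hv => ?_⟩
  · rw [← add_eq_zero_iff_eq_neg]
    apply eq_zero_of_lval_pEvalHom_lt_one
    have hdiv := lval_div_sub_lt_one (P.coeff m) hlead
    rw [ratio, coeff_map, coeff_map] at hud
    have := (lval F).map_sub_lt ((lval F).map_sub_lt hud hint) hdiv
    convert this using 2
    rw [map_add]
    ring
  change u ≠ pEvalHom F (intPart u) at hne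
  change u = pEvalHom F (intPart u) + v⁻¹ at hv
  set A := intPart u
  have hvinv : v⁻¹ = u - pEvalHom F A := by rw [eq_sub_iff_add_eq', ← hv]
  have he : v⁻¹ ≠ 0 := by rw [hvinv]; exact sub_ne_zero.2 hne
  have hv0 : v ≠ 0 := fun h => he (by rw [h, inv_zero])
  have hv1 : 1 < lval F v := by
    rwa [← hvinv, map_inv₀, inv_lt_one₀ ((lval F).pos_iff.2 hv0)] at hint
  -- `A = [u]` is as close to `-a_m / a_{m+1}` as `u` is, so the Taylor estimates apply at `A`.
  have hAd : lval F (pEvalHom F A + ratio m (P.map (pEvalHom F))) < 1 := by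
    have := (lval F).map_sub_lt hud hint
    convert this using 2
    ring
  have hPA : (P.map (pEvalHom F)).eval (pEvalHom F A) ≠ 0 := fun h => hne
    (hp.existsUnique_root.unique ⟨hu, hroot⟩
      ⟨by rw [hp.lval_eq_of_add_lt_one hAd]; exact hp.one_lt_ratio, h⟩)
  -- `Q(Y) = Y ^ n * P(A + 1 / Y)`, whose coefficients are the Taylor coefficients of `P` at `A`
  -- in reverse order.
  set Q : F[X][X] := reflect (m + 1) (taylor A P) with hQ
  have hQcoeff : ∀ i ≤ m + 1, pEvalHom F (Q.coeff i) =
      (taylor (pEvalHom F A) (P.map (pEvalHom F))).coeff (m + 1 - i) := by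
    intro i hi
    rw [hQ, coeff_reflect, revAt_le hi, ← map_taylor, coeff_map]
  have hQstar : ∀ i, i ≤ m + 1 → i ≠ m → (Q.coeff i).degree < (Q.coeff m).degree := by
    intro i hi hi'
    rw [← lval_pEvalHom_lt_iff, hQcoeff i hi, hQcoeff m (by omega), Nat.add_sub_cancel_left]
    rcases lt_or_gt_of_ne hi' with h | h
    · exact hp.lval_taylor_coeff_lt hAd (by omega)
    · obtain rfl : i = m + 1 := by omega
      rw [Nat.sub_self]
      exact hp.lval_taylor_coeff_zero_lt hAd hroot hint
  have hQlead : Q.coeff (m + 1) ≠ 0 := by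
    intro h
    have := hQcoeff (m + 1) le_rfl
    rw [h, map_zero, Nat.sub_self, taylor_coeff_zero] at this
    exact hPA this.symm
  have hQdeg : Q.natDegree = m + 1 := by
    refine le_antisymm (natDegree_le_iff_coeff_eq_zero.2 fun i hi => ?_)
      (le_natDegree_of_ne_zero hQlead)
    rw [hQ, coeff_reflect, revAt_eq_self_of_lt hi]
    exact coeff_eq_zero_of_natDegree_lt (by rwa [natDegree_taylor, hdeg])
  have hQroot : (Q.map (pEvalHom F)).eval v = 0 := by
    let _ := invertibleOfNonzero he
    have h := (eval₂_reflect_eq_zero_iff (pEvalHom F) v⁻¹ (m + 1) (taylor A P)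
      (by rw [natDegree_taylor, hdeg])).2
      (by rw [eval₂_eq_eval_map, map_taylor, taylor_eval, add_comm, ← hv, hroot])
    rwa [invOf_eq_inv, inv_inv, eval₂_eq_eval_map] at h
  have hQp : DominatedBy m (Q.map (pEvalHom F)) := dominatedBy_map_iff.2 ⟨hQdeg, hQstar⟩
  exact ⟨Q, hQdeg, fun h => hQlead (by rw [h, coeff_zero]), hQstar, hv1, hQroot,
    fun w hw hwroot => hQp.existsUnique_root.unique ⟨hw, hwroot⟩ ⟨hv1, hQroot⟩⟩
end
end
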